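/- (Proposition A.1: local Aleksandrov reflection principle.) Let d ≥ 1, 0 < m < 1, R₀ > 0 and λ > 2. Let u solve the homogeneous Dirichlet problem for the FDE ∂ₜu = Δ(u^m) on the ball B_{λR₀}(x₀) with nonnegative initial data u₀ supported in the closure of B_{R₀}(x₀) and extinction time T. Then for every t ∈ (0,T) and every x₂ ∈ B_{λR₀}(x₀) \ B_{2R₀}(x₀): u(t, x₀) ≥ u(t, x₂). Consequently, for every t ∈ (0,T): u(t, x₀) ≥ |A|^{−1} ∫_A u(t,x) dx, where A = B_{λR₀}(x₀) \ B_{2R₀}(x₀). -/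

import Mathlib

open MeasureTheory Metric Set Real

/-- The spatial Laplacian of `f : ℝ^d → ℝ` at a point, as the sum of second
coordinate derivatives. -/
noncomputable def spaceLap {d : ℕ} (f : EuclideanSpace ℝ (Fin d) → ℝ)
    (x : EuclideanSpace ℝ (Fin d)) : ℝ :=
  ∑ i : Fin d, fderiv ℝ (fun y => fderiv ℝ f y (EuclideanSpace.single i 1)) x
    (EuclideanSpace.single i 1)

/-- `u` is a classical solution of the fast diffusion equation `∂ₜ u = Δ(u^m)`
on the space-time set `Q`: it is positive and smooth on `Q` and satisfies the
equation pointwise on `Q`. -/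
def IsFDESol {d : ℕ} (m : ℝ) (Q : Set (ℝ × EuclideanSpace ℝ (Fin d)))
    (u : ℝ → EuclideanSpace ℝ (Fin d) → ℝ) : Prop :=
  (∀ p ∈ Q, 0 < u p.1 p.2) ∧
  ContDiffOn ℝ (⊤ : ℕ∞) (fun p : ℝ × EuclideanSpace ℝ (Fin d) => u p.1 p.2) Q ∧
  ∀ p ∈ Q, deriv (fun s => u s p.2) p.1 = spaceLap (fun y => u p.1 y ^ m) p.2

/-- `u` solves the homogeneous Dirichlet problem for the FDE `∂ₜ u = Δ(u^m)` on the
ball `B_ρ(x₀)` with initial data `u₀` and extinction time `T`. -/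
def IsDirichletSol {d : ℕ} (m : ℝ) (x₀ : EuclideanSpace ℝ (Fin d)) (ρ T : ℝ)
    (u : ℝ → EuclideanSpace ℝ (Fin d) → ℝ) (u₀ : EuclideanSpace ℝ (Fin d) → ℝ) : Prop :=
  (∀ t ∈ Icc 0 T, ∀ x ∈ closedBall x₀ ρ, 0 ≤ u t x) ∧
  ContinuousOn (fun p : ℝ × EuclideanSpace ℝ (Fin d) => u p.1 p.2)
    (Icc 0 T ×ˢ closedBall x₀ ρ) ∧
  IsFDESol m (Ioo 0 T ×ˢ ball x₀ ρ) u ∧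
  (∀ x ∈ ball x₀ ρ, u 0 x = u₀ x) ∧
  (∀ t ∈ Ioc 0 T, ∀ x ∈ sphere x₀ ρ, u t x = 0) ∧
  (∀ x ∈ closedBall x₀ ρ, u T x = 0) ∧
  ∀ t ∈ Ioo 0 T, ∃ x ∈ ball x₀ ρ, u t x ≠ 0

/-!
Let `σ` be the reflection exchanging `x₂` and `x₀`, and let `D` be the part of the ball on the side
of `x₂` of the mirror. On `D` the difference `f = u - u ∘ σ` satisfies `∂ₜ f = Δ φ` with
`φ = u ^ m - (u ∘ σ) ^ m`, which has the same sign as `f`. Both are nonpositive on the parabolic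
boundary: on the sphere `u` vanishes, on the mirror `σ` is the identity, and the support of `u₀`
does not cross the mirror because `2 * R₀ ≤ dist x₂ x₀`. Kato's inequality turns the equation into
`∂ₜ f⁺ ≤ Δ φ⁺` in the sense of distributions. Testing it against a cutoff of `(T - t) * s(x)`, where
`s` is positive and superharmonic on `D` and vanishes on its boundary, gives
`∫∫ f⁺ s ≤ (error of the cutoff)`. The error tends to `0` although no gradient bound at the boundary
is available, because `f⁺` and `φ⁺` may be lowered by any constant `ε`, making them nonpositive
where the derivatives of the cutoff have the wrong sign. Hence `u ≤ u ∘ σ` on `D`; evaluate at `x₂`.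
-/

open Filter
open scoped ContDiff Topology

namespace FastDiffusion

section DirectionalDerivative

variable {V : Type*} [NormedAddCommGroup V] [NormedSpace ℝ V] {ι : Type*} [Fintype ι]
  {F G : V → ℝ} {Q : Set V} {p v : V} {e : ι → V}

/-- The derivative `∂ᵥF` of `F` in the direction `v`; it is `0` where `F` is not differentiable. -/
noncomputable def dirDeriv (v : V) (F : V → ℝ) (p : V) : ℝ :=
  fderiv ℝ F p v

/-- The second order operator `∑ᵢ ∂ₑᵢ∂ₑᵢ F` attached to a finite family `e` of directions: the
Laplacian when `e` is an orthonormal basis, a degenerate elliptic operator when `e` does not span,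
as for the spatial directions in space-time. -/
noncomputable def sumSqDeriv (e : ι → V) (F : V → ℝ) (p : V) : ℝ :=
  ∑ i, dirDeriv (e i) (dirDeriv (e i) F) p

theorem dirDeriv_const (c : ℝ) : dirDeriv v (fun _ => c) = fun _ => 0 := by
  funext p
  simp only [dirDeriv, fderiv_fun_const, Pi.zero_apply, zero_apply]

theorem sumSqDeriv_const (c : ℝ) : sumSqDeriv e (fun _ => c) p = 0 := by
  simp only [sumSqDeriv, dirDeriv_const, Finset.sum_const_zero]

theorem dirDeriv_const_mul (c : ℝ) : dirDeriv v (fun q => c * F q) = fun q => c * dirDeriv v F q :=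
  funext fun q => congrArg (fun L : V → V →L[ℝ] ℝ => L q v) (fderiv_const_smul_field (f := F) c)

theorem dirDeriv_mul (hF : DifferentiableAt ℝ F p) (hG : DifferentiableAt ℝ G p) :
    dirDeriv v (fun q => F q * G q) p = dirDeriv v F p * G p + F p * dirDeriv v G p := by
  simp only [dirDeriv, fderiv_fun_mul hF hG, add_apply, smul_apply, smul_eq_mul]
  ring

theorem dirDeriv_add (hF : DifferentiableAt ℝ F p) (hG : DifferentiableAt ℝ G p) :
    dirDeriv v (fun q => F q + G q) p = dirDeriv v F p + dirDeriv v G p := by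
  simp only [dirDeriv, fderiv_fun_add hF hG, add_apply]

theorem dirDeriv_sub (hF : DifferentiableAt ℝ F p) (hG : DifferentiableAt ℝ G p) :
    dirDeriv v (fun q => F q - G q) p = dirDeriv v F p - dirDeriv v G p := by
  simp only [dirDeriv, fderiv_fun_sub hF hG, sub_apply]

theorem dirDeriv_comp {g : ℝ → ℝ} {g' : ℝ} (hg : HasDerivAt g g' (F p))
    (hF : DifferentiableAt ℝ F p) :
    dirDeriv v (fun q => g (F q)) p = g' * dirDeriv v F p := by
  have hcomp : HasFDerivAt (fun q => g (F q)) (g' • fderiv ℝ F p) p :=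
    hg.comp_hasFDerivAt p hF.hasFDerivAt
  simp only [dirDeriv, hcomp.fderiv, smul_apply, smul_eq_mul]

theorem dirDeriv_congr (h : F =ᶠ[𝓝 p] G) : dirDeriv v F p = dirDeriv v G p := by
  rw [dirDeriv, dirDeriv, h.fderiv_eq]

theorem contDiffOn_dirDeriv {n k : WithTop ℕ∞} (hQ : IsOpen Q) (hF : ContDiffOn ℝ n F Q)
    (hk : k + 1 ≤ n) : ContDiffOn ℝ k (dirDeriv v F) Q :=
  (hF.fderiv_of_isOpen hQ hk).clm_apply contDiffOn_const

theorem continuousOn_dirDeriv (hQ : IsOpen Q) (hF : ContDiffOn ℝ 1 F Q) :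
    ContinuousOn (dirDeriv v F) Q :=
  (contDiffOn_dirDeriv (k := 0) hQ hF (by norm_num)).continuousOn

theorem contDiffOn_one_dirDeriv (hQ : IsOpen Q) (hF : ContDiffOn ℝ 2 F Q) :
    ContDiffOn ℝ 1 (dirDeriv v F) Q :=
  contDiffOn_dirDeriv hQ hF one_add_one_eq_two.le

theorem continuousOn_sumSqDeriv (hQ : IsOpen Q) (hF : ContDiffOn ℝ 2 F Q) :
    ContinuousOn (sumSqDeriv e F) Q :=
  continuousOn_finsetSum _ fun _ _ =>
    continuousOn_dirDeriv hQ (contDiffOn_one_dirDeriv hQ hF)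

theorem differentiableAt_of_contDiffOn {n : WithTop ℕ∞} (hQ : IsOpen Q) (hF : ContDiffOn ℝ n F Q)
    (hn : n ≠ 0) (hp : p ∈ Q) : DifferentiableAt ℝ F p :=
  (hF.contDiffAt (hQ.mem_nhds hp)).differentiableAt hn

theorem sumSqDeriv_congr (h : F =ᶠ[𝓝 p] G) : sumSqDeriv e F p = sumSqDeriv e G p := by
  refine Finset.sum_congr rfl fun i _ => dirDeriv_congr ?_
  filter_upwards [h.eventuallyEq_nhds] with q hq using dirDeriv_congr hq

theorem eventually_differentiableAt_of_contDiffAt (hF : ContDiffAt ℝ 2 F p) :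
    ∀ᶠ q in 𝓝 p, DifferentiableAt ℝ F q :=
  (hF.eventually (by simp)).mono fun _ hq => hq.differentiableAt two_ne_zero

theorem differentiableAt_dirDeriv (hF : ContDiffAt ℝ 2 F p) :
    DifferentiableAt ℝ (dirDeriv v F) p :=
  ((hF.fderiv_right one_add_one_eq_two.le).differentiableAt one_ne_zero).clm_apply
    (differentiableAt_const v)

theorem sumSqDeriv_sub (hF : ContDiffAt ℝ 2 F p) (hG : ContDiffAt ℝ 2 G p) :
    sumSqDeriv e (fun q => F q - G q) p = sumSqDeriv e F p - sumSqDeriv e G p := by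
  simp only [sumSqDeriv, ← Finset.sum_sub_distrib]
  refine Finset.sum_congr rfl fun i _ => ?_
  rw [← dirDeriv_sub (differentiableAt_dirDeriv hF) (differentiableAt_dirDeriv hG)]
  refine dirDeriv_congr ?_
  filter_upwards [eventually_differentiableAt_of_contDiffAt hF,
    eventually_differentiableAt_of_contDiffAt hG] with q hFq hGq using dirDeriv_sub hFq hGq

theorem sumSqDeriv_const_mul (c : ℝ) :
    sumSqDeriv e (fun q => c * F q) p = c * sumSqDeriv e F p := by
  simp only [sumSqDeriv, dirDeriv_const_mul, Finset.mul_sum]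

theorem sumSqDeriv_mul (hF : ContDiffAt ℝ 2 F p) (hG : ContDiffAt ℝ 2 G p) :
    sumSqDeriv e (fun q => F q * G q) p =
      sumSqDeriv e F p * G p + 2 * ∑ i, dirDeriv (e i) F p * dirDeriv (e i) G p +
        F p * sumSqDeriv e G p := by
  simp only [sumSqDeriv, Finset.mul_sum, Finset.sum_mul, ← Finset.sum_add_distrib]
  refine Finset.sum_congr rfl fun i _ => ?_
  have hFp : DifferentiableAt ℝ F p := hF.differentiableAt two_ne_zero
  have hGp : DifferentiableAt ℝ G p := hG.differentiableAt two_ne_zero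
  have hF' := differentiableAt_dirDeriv (v := e i) hF
  have hG' := differentiableAt_dirDeriv (v := e i) hG
  have hfirst : dirDeriv (e i) (fun q => F q * G q) =ᶠ[𝓝 p]
      fun q => dirDeriv (e i) F q * G q + F q * dirDeriv (e i) G q := by
    filter_upwards [eventually_differentiableAt_of_contDiffAt hF,
      eventually_differentiableAt_of_contDiffAt hG] with q hFq hGq using dirDeriv_mul hFq hGq
  rw [dirDeriv_congr hfirst, dirDeriv_add (hF'.fun_mul hGp) (hFp.fun_mul hG'),
    dirDeriv_mul hF' hGp, dirDeriv_mul hFp hG']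
  ring

theorem sumSqDeriv_comp {g g' : ℝ → ℝ} {g'' : ℝ} (hg : ∀ r, HasDerivAt g (g' r) r)
    (hg' : HasDerivAt g' g'' (F p)) (hF : ContDiffAt ℝ 2 F p) :
    sumSqDeriv e (fun q => g (F q)) p =
      g'' * ∑ i, dirDeriv (e i) F p ^ 2 + g' (F p) * sumSqDeriv e F p := by
  simp only [sumSqDeriv, Finset.mul_sum, ← Finset.sum_add_distrib]
  refine Finset.sum_congr rfl fun i _ => ?_
  have hFp : DifferentiableAt ℝ F p := hF.differentiableAt two_ne_zero
  have hcomp : DifferentiableAt ℝ (fun q => g' (F q)) p := hg'.differentiableAt.comp p hFp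
  have hfirst : dirDeriv (e i) (fun q => g (F q)) =ᶠ[𝓝 p]
      fun q => g' (F q) * dirDeriv (e i) F q := by
    filter_upwards [eventually_differentiableAt_of_contDiffAt hF] with q hq
      using dirDeriv_comp (hg (F q)) hq
  rw [dirDeriv_congr hfirst,
    dirDeriv_mul hcomp (differentiableAt_dirDeriv hF),
    dirDeriv_comp hg' hFp]
  ring

theorem le_sumSqDeriv_comp {g g' : ℝ → ℝ} {g'' : ℝ} (hg : ∀ r, HasDerivAt g (g' r) r)
    (hg' : HasDerivAt g' g'' (F p)) (hg'' : 0 ≤ g'') (hF : ContDiffAt ℝ 2 F p) :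
    g' (F p) * sumSqDeriv e F p ≤ sumSqDeriv e (fun q => g (F q)) p := by
  rw [sumSqDeriv_comp hg hg' hF]
  exact le_add_of_nonneg_left (mul_nonneg hg'' (Finset.sum_nonneg fun _ _ => sq_nonneg _))

end DirectionalDerivative

section CompactSupport

/-- Inside `Q`, the function `F` vanishes off some compact subset of `Q`. The values of `F` outside
`Q` are unconstrained, so that a function known to be smooth only on `Q` need not be cut off. -/
def HasCompactSupportIn {X : Type*} [TopologicalSpace X] (F : X → ℝ) (Q : Set X) : Prop :=
  ∃ K ⊆ Q, IsCompact K ∧ ∀ p ∈ Q \ K, F p = 0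

namespace HasCompactSupportIn

section Topological

variable {X : Type*} [TopologicalSpace X] {F G : X → ℝ} {Q : Set X}

theorem mul_left (hG : HasCompactSupportIn G Q) (F : X → ℝ) :
    HasCompactSupportIn (fun p => F p * G p) Q := by
  obtain ⟨K, hKQ, hK, hzero⟩ := hG
  exact ⟨K, hKQ, hK, fun p hp => mul_eq_zero_of_right _ (hzero p hp)⟩

theorem of_eventuallyEq_zero [T2Space X] (hF : HasCompactSupportIn F Q) (hQ : IsOpen Q)
    (hG : ∀ p, F =ᶠ[𝓝 p] (fun _ => 0) → G p = 0) : HasCompactSupportIn G Q := by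
  obtain ⟨K, hKQ, hK, hzero⟩ := hF
  refine ⟨K, hKQ, hK, fun p hp => hG p ?_⟩
  filter_upwards [(hQ.sdiff hK.isClosed).mem_nhds hp] with q hq using hzero q hq

theorem integrableOn [MeasurableSpace X] [OpensMeasurableSpace X] [T2Space X]
    {μ : Measure X} [IsFiniteMeasureOnCompacts μ]
    (hF : HasCompactSupportIn F Q) (hQ : IsOpen Q) (hcont : ContinuousOn F Q) :
    IntegrableOn F Q μ := by
  obtain ⟨K, hKQ, hK, hzero⟩ := hF
  exact ((hcont.mono hKQ).integrableOn_compact hK).of_forall_sdiff_eq_zero hQ.measurableSet hzero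

end Topological

variable {V : Type*} [NormedAddCommGroup V] [NormedSpace ℝ V] {ι : Type*} [Fintype ι]
  {F : V → ℝ} {Q : Set V} {v : V} {e : ι → V}

protected theorem dirDeriv (hF : HasCompactSupportIn F Q) (hQ : IsOpen Q) :
    HasCompactSupportIn (dirDeriv v F) Q :=
  hF.of_eventuallyEq_zero hQ fun p hp => by rw [dirDeriv_congr hp, dirDeriv_const]

protected theorem sumSqDeriv (hF : HasCompactSupportIn F Q) (hQ : IsOpen Q) :
    HasCompactSupportIn (sumSqDeriv e F) Q :=
  hF.of_eventuallyEq_zero hQ fun p hp => by rw [sumSqDeriv_congr hp, sumSqDeriv_const]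

variable [FiniteDimensional ℝ V] [MeasurableSpace V] [BorelSpace V] {μ : Measure V}
  [μ.IsAddHaarMeasure]

theorem setIntegral_dirDeriv_eq_zero (hF : HasCompactSupportIn F Q) (hQ : IsOpen Q)
    (hsmooth : ContDiffOn ℝ 1 F Q) : ∫ p in Q, dirDeriv v F p ∂μ = 0 := by
  have hF_int : IntegrableOn F Q μ := hF.integrableOn hQ hsmooth.continuousOn
  have hdF_int : IntegrableOn (dirDeriv v F) Q μ :=
    (hF.dirDeriv hQ).integrableOn hQ (continuousOn_dirDeriv hQ hsmooth)
  obtain ⟨K, hKQ, hK, hzero⟩ := hF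
  have hext : ∀ p, HasFDerivAt (Q.indicator F) (Q.indicator (fderiv ℝ F) p) p := by
    intro p
    by_cases hp : p ∈ Q
    · rw [indicator_of_mem hp]
      refine (differentiableAt_of_contDiffOn hQ hsmooth one_ne_zero hp).hasFDerivAt
        |>.congr_of_eventuallyEq ?_
      filter_upwards [hQ.mem_nhds hp] with q hq using indicator_of_mem hq F
    · rw [indicator_of_notMem hp]
      refine (hasFDerivAt_const (0 : ℝ) p).congr_of_eventuallyEq ?_
      filter_upwards [hK.isClosed.isOpen_compl.mem_nhds fun hpK => hp (hKQ hpK)] with q hq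
      exact indicator_apply_eq_zero.2 fun hqQ => hzero q ⟨hqQ, hq⟩
  have hderiv : (fun p => fderiv ℝ (Q.indicator F) p v) = Q.indicator (dirDeriv v F) := by
    funext p
    rw [(hext p).fderiv]
    by_cases hp : p ∈ Q <;> simp [hp, dirDeriv]
  have hparts := integral_mul_fderiv_eq_neg_fderiv_mul_of_integrable (μ := μ)
    (f := fun _ : V => (1 : ℝ)) (g := Q.indicator F) (v := v) (by simp)
    (by simpa only [one_mul, hderiv] using hdF_int.integrable_indicator hQ.measurableSet)
    (by simpa only [one_mul] using hF_int.integrable_indicator hQ.measurableSet)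
    (fun _ _ => differentiableAt_const _) (fun p _ => (hext p).differentiableAt)
  simpa [hderiv, integral_indicator hQ.measurableSet] using hparts

end HasCompactSupportIn

variable {V : Type*} [NormedAddCommGroup V] [NormedSpace ℝ V] [FiniteDimensional ℝ V]
  [MeasurableSpace V] [BorelSpace V] {μ : Measure V} [μ.IsAddHaarMeasure]
  {ι : Type*} [Fintype ι] {F G : V → ℝ} {Q : Set V} {v : V} {e : ι → V}

theorem setIntegral_dirDeriv_mul (hQ : IsOpen Q) (hF : ContDiffOn ℝ 1 F Q)
    (hG : ContDiffOn ℝ 1 G Q) (hG_supp : HasCompactSupportIn G Q) :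
    ∫ p in Q, dirDeriv v F p * G p ∂μ = -∫ p in Q, F p * dirDeriv v G p ∂μ := by
  have hleft : IntegrableOn (fun p => dirDeriv v F p * G p) Q μ :=
    (hG_supp.mul_left _).integrableOn hQ ((continuousOn_dirDeriv hQ hF).mul hG.continuousOn)
  have hright : IntegrableOn (fun p => F p * dirDeriv v G p) Q μ :=
    ((hG_supp.dirDeriv hQ).mul_left _).integrableOn hQ
      (hF.continuousOn.mul (continuousOn_dirDeriv hQ hG))
  rw [eq_neg_iff_add_eq_zero, ← integral_add hleft hright,
    ← (hG_supp.mul_left F).setIntegral_dirDeriv_eq_zero (v := v) (μ := μ) hQ (hF.mul hG)]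
  refine setIntegral_congr_fun hQ.measurableSet fun p hp => Eq.symm ?_
  exact dirDeriv_mul (differentiableAt_of_contDiffOn hQ hF one_ne_zero hp)
    (differentiableAt_of_contDiffOn hQ hG one_ne_zero hp)

theorem setIntegral_sumSqDeriv_mul (hQ : IsOpen Q) (hF : ContDiffOn ℝ 2 F Q)
    (hG : ContDiffOn ℝ 2 G Q) (hG_supp : HasCompactSupportIn G Q) :
    ∫ p in Q, sumSqDeriv e F p * G p ∂μ = ∫ p in Q, F p * sumSqDeriv e G p ∂μ := by
  have hF' (i : ι) := contDiffOn_one_dirDeriv (v := e i) hQ hF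
  have hG' (i : ι) := contDiffOn_one_dirDeriv (v := e i) hQ hG
  have htwice (i : ι) : ∫ p in Q, dirDeriv (e i) (dirDeriv (e i) F) p * G p ∂μ =
      ∫ p in Q, F p * dirDeriv (e i) (dirDeriv (e i) G) p ∂μ := by
    rw [setIntegral_dirDeriv_mul hQ (hF' i) (hG.of_le one_le_two) hG_supp,
      setIntegral_dirDeriv_mul hQ (hF.of_le one_le_two) (hG' i) (hG_supp.dirDeriv hQ), neg_neg]
  simp only [sumSqDeriv, Finset.sum_mul, Finset.mul_sum]
  rw [integral_finsetSum _ fun i _ => (hG_supp.mul_left _).integrableOn hQ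
      ((continuousOn_dirDeriv hQ (hF' i)).mul hG.continuousOn),
    integral_finsetSum _ fun i _ => (((hG_supp.dirDeriv hQ).dirDeriv hQ).mul_left _).integrableOn hQ
      (hF.continuousOn.mul (continuousOn_dirDeriv hQ (hG' i)))]
  exact Finset.sum_congr rfl fun i _ => htwice i

theorem setIntegral_sumSqDeriv_eq_zero (hQ : IsOpen Q) (hG : ContDiffOn ℝ 2 G Q)
    (hG_supp : HasCompactSupportIn G Q) : ∫ p in Q, sumSqDeriv e G p ∂μ = 0 := by
  have hparts := setIntegral_sumSqDeriv_mul (e := e) (μ := μ) hQ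
    (contDiffOn_const (c := (1 : ℝ))) hG hG_supp
  simpa only [sumSqDeriv_const, zero_mul, integral_zero, one_mul] using hparts.symm

end CompactSupport

section SmoothPositivePart

variable {δ δ' r : ℝ}

/-- A smooth monotone approximation, at scale `δ`, of the indicator function of `(0, ∞)`: it is `0`
for `r ≤ δ` and `1` for `r ≥ 2 * δ`. -/
noncomputable def smoothStep (δ r : ℝ) : ℝ :=
  smoothTransition (r / δ - 1)

/-- The primitive of `smoothStep δ` vanishing at `0`: a smooth convex approximation of the positive
part `max r 0`, which vanishes for `r ≤ δ`. -/
noncomputable def smoothPos (δ r : ℝ) : ℝ :=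
  ∫ x in (0 : ℝ)..r, smoothStep δ x

theorem contDiff_smoothStep (δ : ℝ) : ContDiff ℝ ∞ (smoothStep δ) :=
  smoothTransition.contDiff.comp ((contDiff_id.div_const δ).sub contDiff_const)

theorem continuous_smoothStep (δ : ℝ) : Continuous (smoothStep δ) :=
  (contDiff_smoothStep δ).continuous

theorem hasDerivAt_smoothStep (δ r : ℝ) : HasDerivAt (smoothStep δ) (deriv (smoothStep δ) r) r :=
  ((contDiff_smoothStep δ).differentiable (by simp) r).hasDerivAt

theorem smoothStep_nonneg (δ r : ℝ) : 0 ≤ smoothStep δ r :=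
  smoothTransition.nonneg _

theorem smoothStep_le_one (δ r : ℝ) : smoothStep δ r ≤ 1 :=
  smoothTransition.le_one _

theorem smoothStep_of_le (hδ : 0 < δ) (hr : r ≤ δ) : smoothStep δ r = 0 :=
  smoothTransition.zero_of_nonpos (sub_nonpos.2 ((div_le_one hδ).2 hr))

theorem smoothStep_of_two_mul_le (hδ : 0 < δ) (hr : 2 * δ ≤ r) : smoothStep δ r = 1 :=
  smoothTransition.one_of_one_le (le_sub_iff_add_le.2 ((le_div_iff₀ hδ).2 (by linarith)))

theorem monotone_smoothStep (hδ : 0 < δ) : Monotone (smoothStep δ) := fun _ _ h =>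
  smoothTransition.monotone (sub_le_sub_right (div_le_div_of_nonneg_right h hδ.le) 1)

theorem smoothStep_anti_scale (hδ : 0 < δ) (hδ' : δ ≤ δ') (r : ℝ) :
    smoothStep δ' r ≤ smoothStep δ r := by
  rcases le_total r 0 with hr | hr
  · rw [smoothStep_of_le (hδ.trans_le hδ') (hr.trans (hδ.trans_le hδ').le)]
    exact smoothStep_nonneg δ r
  · exact smoothTransition.monotone (sub_le_sub_right (div_le_div_of_nonneg_left hr hδ hδ') 1)

theorem deriv_smoothStep_nonneg (hδ : 0 < δ) (r : ℝ) : 0 ≤ deriv (smoothStep δ) r :=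
  (monotone_smoothStep hδ).deriv_nonneg

theorem deriv_smoothStep_of_two_mul_le (hδ : 0 < δ) (hr : 2 * δ ≤ r) :
    deriv (smoothStep δ) r = 0 :=
  IsLocalMax.deriv_eq_zero <| Eventually.of_forall fun q => by
    rw [smoothStep_of_two_mul_le hδ hr]
    exact smoothStep_le_one δ q

theorem hasDerivAt_smoothPos (δ r : ℝ) : HasDerivAt (smoothPos δ) (smoothStep δ r) r :=
  (continuous_smoothStep δ).integral_hasStrictDerivAt 0 r |>.hasDerivAt

theorem contDiff_smoothPos (δ : ℝ) : ContDiff ℝ ∞ (smoothPos δ) := by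
  refine contDiff_infty_iff_deriv.2 ⟨fun r => (hasDerivAt_smoothPos δ r).differentiableAt, ?_⟩
  rw [funext fun r => (hasDerivAt_smoothPos δ r).deriv]
  exact contDiff_smoothStep δ

theorem smoothPos_of_le (hδ : 0 < δ) (hr : r ≤ δ) : smoothPos δ r = 0 := by
  have hvanish : EqOn (smoothStep δ) (fun _ => 0) (uIcc 0 r) := fun x hx =>
    smoothStep_of_le hδ (hx.2.trans (max_le hδ.le hr))
  rw [smoothPos, intervalIntegral.integral_congr hvanish, intervalIntegral.integral_zero]

theorem smoothPos_nonneg (hδ : 0 < δ) (r : ℝ) : 0 ≤ smoothPos δ r := by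
  rcases le_total r 0 with hr | hr
  · exact (smoothPos_of_le hδ (hr.trans hδ.le)).ge
  · exact intervalIntegral.integral_nonneg hr fun x _ => smoothStep_nonneg δ x

theorem smoothPos_le_self (hr : 0 ≤ r) : smoothPos δ r ≤ r := by
  calc smoothPos δ r ≤ ∫ _ in (0 : ℝ)..r, (1 : ℝ) :=
        intervalIntegral.integral_mono_on hr ((continuous_smoothStep δ).intervalIntegrable _ _)
          intervalIntegrable_const fun x _ => smoothStep_le_one δ x
    _ = r := by simp

theorem sub_two_mul_le_smoothPos (hδ : 0 < δ) (r : ℝ) : r - 2 * δ ≤ smoothPos δ r := by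
  rcases le_total r (2 * δ) with hr | hr
  · exact (sub_nonpos.2 hr).trans (smoothPos_nonneg hδ r)
  have hsplit : smoothPos δ r = smoothPos δ (2 * δ) + ∫ x in (2 * δ)..r, smoothStep δ x :=
    (intervalIntegral.integral_add_adjacent_intervals
      ((continuous_smoothStep δ).intervalIntegrable _ _)
      ((continuous_smoothStep δ).intervalIntegrable _ _)).symm
  have hone : EqOn (smoothStep δ) (fun _ => 1) (uIcc (2 * δ) r) := fun x hx =>
    smoothStep_of_two_mul_le hδ (by rw [uIcc_of_le hr] at hx; exact hx.1)
  rw [hsplit, intervalIntegral.integral_congr hone, intervalIntegral.integral_const, smul_eq_mul,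
    mul_one]
  exact le_add_of_nonneg_left (smoothPos_nonneg hδ _)

theorem abs_smoothPos_le (hδ : 0 < δ) (r : ℝ) : |smoothPos δ r| ≤ |r| := by
  rw [abs_of_nonneg (smoothPos_nonneg hδ r)]
  rcases le_total r 0 with hr | hr
  · exact (smoothPos_of_le hδ (hr.trans hδ.le)).trans_le (abs_nonneg r)
  · exact (smoothPos_le_self hr).trans (le_abs_self r)

theorem smoothPos_pos (hδ : 0 < δ) (hr : 2 * δ < r) : 0 < smoothPos δ r :=
  (sub_pos.2 hr).trans_le (sub_two_mul_le_smoothPos hδ r)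

theorem smoothPos_anti_scale (hδ : 0 < δ) (hδ' : δ ≤ δ') (r : ℝ) :
    smoothPos δ' r ≤ smoothPos δ r := by
  rcases le_total r 0 with hr | hr
  · rw [smoothPos_of_le (hδ.trans_le hδ') (hr.trans (hδ.trans_le hδ').le)]
    exact smoothPos_nonneg hδ r
  · exact intervalIntegral.integral_mono_on hr ((continuous_smoothStep δ').intervalIntegrable _ _)
      ((continuous_smoothStep δ).intervalIntegrable _ _)
      fun x _ => smoothStep_anti_scale hδ hδ' x

theorem tendsto_smoothPos (r : ℝ) :
    Tendsto (fun δ => smoothPos δ r) (𝓝[>] 0) (𝓝 (max r 0)) := by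
  rcases le_total r 0 with hr | hr
  · rw [max_eq_right hr]
    refine tendsto_const_nhds.congr' ?_
    filter_upwards [self_mem_nhdsWithin] with δ hδ
    exact (smoothPos_of_le hδ (hr.trans (le_of_lt hδ))).symm
  · rw [max_eq_left hr]
    have hlower : Tendsto (fun δ : ℝ => r - 2 * δ) (𝓝[>] 0) (𝓝 r) := by
      refine Tendsto.mono_left ?_ nhdsWithin_le_nhds
      exact Continuous.tendsto' (by fun_prop) _ _ (by simp)
    refine tendsto_of_tendsto_of_tendsto_of_le_of_le' hlower tendsto_const_nhds ?_
      (Eventually.of_forall fun δ => smoothPos_le_self hr)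
    filter_upwards [self_mem_nhdsWithin] with δ hδ using sub_two_mul_le_smoothPos hδ r

theorem eventually_smoothStep_eq (r : ℝ) :
    ∀ᶠ δ in 𝓝[>] 0, smoothStep δ r = if 0 < r then 1 else 0 := by
  split_ifs with hr
  · filter_upwards [Ioc_mem_nhdsGT (half_pos hr)] with δ hδ
    exact smoothStep_of_two_mul_le hδ.1 (by linarith [hδ.2])
  · filter_upwards [self_mem_nhdsWithin] with δ hδ
    exact smoothStep_of_le hδ ((not_lt.1 hr).trans (le_of_lt hδ))

end SmoothPositivePart

section Kato

theorem tendsto_setIntegral_mul {α X : Type*} {l : Filter α} [l.IsCountablyGenerated]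
    [TopologicalSpace X] [T2Space X] [MeasurableSpace X]
    [OpensMeasurableSpace X] {μ : Measure X} [IsFiniteMeasureOnCompacts μ] {Q : Set X}
    {h : α → X → ℝ} {H b w : X → ℝ} (hQ : IsOpen Q) (hw : ContinuousOn w Q)
    (hw_supp : HasCompactSupportIn w Q) (hb : ContinuousOn b Q)
    (hcont : ∀ᶠ a in l, ContinuousOn (h a) Q) (hbound : ∀ᶠ a in l, ∀ p ∈ Q, |h a p| ≤ b p)
    (hlim : ∀ p ∈ Q, Tendsto (fun a => h a p) l (𝓝 (H p))) :
    Tendsto (fun a => ∫ p in Q, h a p * w p ∂μ) l (𝓝 (∫ p in Q, H p * w p ∂μ)) := by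
  have hint {g : X → ℝ} (hg : ContinuousOn g Q) : IntegrableOn (fun p => g p * w p) Q μ :=
    (hw_supp.mul_left g).integrableOn hQ (hg.mul hw)
  refine tendsto_integral_filter_of_dominated_convergence (fun p => |b p * w p|)
    (hcont.mono fun a ha => (hint ha).aestronglyMeasurable) ?_ (hint hb).abs ?_
  · filter_upwards [hbound] with a ha
    refine ae_restrict_of_forall_mem hQ.measurableSet fun p hp => ?_
    rw [norm_eq_abs, abs_mul, abs_mul]
    exact mul_le_mul_of_nonneg_right ((ha p hp).trans (le_abs_self _)) (abs_nonneg _)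
  · exact ae_restrict_of_forall_mem hQ.measurableSet fun p hp => (hlim p hp).mul_const _

variable {V : Type*} [NormedAddCommGroup V] [NormedSpace ℝ V] {ι : Type*} [Fintype ι]
  {Q : Set V} {τ : V} {e : ι → V} {f φ ζ : V → ℝ} {δ : ℝ}

theorem smoothStep_sub_mul_dirDeriv_le {p : V} (hδ : 0 < δ)
    (hsub : dirDeriv τ f p ≤ sumSqDeriv e φ p) (hf : DifferentiableAt ℝ f p)
    (hφ : ContDiffAt ℝ 2 φ p) :
    (smoothStep δ (φ p) - smoothStep δ (f p)) * dirDeriv τ f p ≤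
      sumSqDeriv e (fun q => smoothPos δ (φ q)) p - dirDeriv τ (fun q => smoothPos δ (f q)) p := by
  have hconvex := le_sumSqDeriv_comp (e := e) (hasDerivAt_smoothPos δ)
    (hasDerivAt_smoothStep δ (φ p)) (deriv_smoothStep_nonneg hδ _) hφ
  have hchain := dirDeriv_comp (v := τ) (hasDerivAt_smoothPos δ (f p)) hf
  have hequation := mul_le_mul_of_nonneg_left hsub (smoothStep_nonneg δ (φ p))
  linarith

variable [FiniteDimensional ℝ V] [MeasurableSpace V] [BorelSpace V] {μ : Measure V}
  [μ.IsAddHaarMeasure]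

theorem kato_regularized (hδ : 0 < δ) (hQ : IsOpen Q) (hf : ContDiffOn ℝ 1 f Q)
    (hφ : ContDiffOn ℝ 2 φ Q) (hζ : ContDiffOn ℝ 2 ζ Q) (hζ_supp : HasCompactSupportIn ζ Q)
    (hζ_nonneg : ∀ p ∈ Q, 0 ≤ ζ p) (hsub : ∀ p ∈ Q, dirDeriv τ f p ≤ sumSqDeriv e φ p) :
    ∫ p in Q, (smoothStep δ (φ p) - smoothStep δ (f p)) * (dirDeriv τ f p * ζ p) ∂μ ≤
      ∫ p in Q, smoothPos δ (f p) * dirDeriv τ ζ p ∂μ +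
        ∫ p in Q, smoothPos δ (φ p) * sumSqDeriv e ζ p ∂μ := by
  have hf_pos : ContDiffOn ℝ 1 (fun p => smoothPos δ (f p)) Q :=
    ((contDiff_smoothPos δ).of_le (by simp)).comp_contDiffOn hf
  have hφ_pos : ContDiffOn ℝ 2 (fun p => smoothPos δ (φ p)) Q :=
    ((contDiff_smoothPos δ).of_le (WithTop.coe_le_coe.2 le_top)).comp_contDiffOn hφ
  have hint {g : V → ℝ} (hg : ContinuousOn g Q) : IntegrableOn (fun p => g p * ζ p) Q μ :=
    (hζ_supp.mul_left g).integrableOn hQ (hg.mul hζ.continuousOn)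
  have hstep {g : V → ℝ} (hg : ContinuousOn g Q) :
      ContinuousOn (fun p => smoothStep δ (g p)) Q :=
    (continuous_smoothStep δ).comp_continuousOn hg
  calc ∫ p in Q, (smoothStep δ (φ p) - smoothStep δ (f p)) * (dirDeriv τ f p * ζ p) ∂μ
      ≤ ∫ p in Q, (sumSqDeriv e (fun q => smoothPos δ (φ q)) p * ζ p -
          dirDeriv τ (fun q => smoothPos δ (f q)) p * ζ p) ∂μ := by
        refine setIntegral_mono_on ?_ ((hint (continuousOn_sumSqDeriv hQ hφ_pos)).sub
          (hint (continuousOn_dirDeriv hQ hf_pos))) hQ.measurableSet fun p hp => ?_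
        · simpa only [mul_assoc] using hint (((hstep hφ.continuousOn).fun_sub
            (hstep hf.continuousOn)).fun_mul (continuousOn_dirDeriv hQ hf))
        · simpa only [mul_assoc, sub_mul] using
            mul_le_mul_of_nonneg_right (smoothStep_sub_mul_dirDeriv_le hδ (hsub p hp)
              (differentiableAt_of_contDiffOn hQ hf one_ne_zero hp)
              (hφ.contDiffAt (hQ.mem_nhds hp))) (hζ_nonneg p hp)
    _ = _ := by
        rw [integral_sub (hint (continuousOn_sumSqDeriv hQ hφ_pos))
            (hint (continuousOn_dirDeriv hQ hf_pos)),
          setIntegral_sumSqDeriv_mul hQ hφ_pos hζ hζ_supp,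
          setIntegral_dirDeriv_mul hQ hf_pos (hζ.of_le one_le_two) hζ_supp]
        ring

theorem kato_inequality (hQ : IsOpen Q) (hf : ContDiffOn ℝ 1 f Q) (hφ : ContDiffOn ℝ 2 φ Q)
    (hζ : ContDiffOn ℝ 2 ζ Q) (hζ_supp : HasCompactSupportIn ζ Q)
    (hζ_nonneg : ∀ p ∈ Q, 0 ≤ ζ p) (hsub : ∀ p ∈ Q, dirDeriv τ f p ≤ sumSqDeriv e φ p)
    (hsign : ∀ p ∈ Q, 0 < f p ↔ 0 < φ p) :
    0 ≤ ∫ p in Q, max (f p) 0 * dirDeriv τ ζ p ∂μ +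
      ∫ p in Q, max (φ p) 0 * sumSqDeriv e ζ p ∂μ := by
  have hζ₁ : ContDiffOn ℝ 1 ζ Q := hζ.of_le one_le_two
  have hstep {g : V → ℝ} (hg : ContinuousOn g Q) (δ : ℝ) :
      ContinuousOn (fun p => smoothStep δ (g p)) Q := (continuous_smoothStep δ).comp_continuousOn hg
  have hpos {g w : V → ℝ} (hg : ContinuousOn g Q) (hw : ContinuousOn w Q)
      (hw_supp : HasCompactSupportIn w Q) :
      Tendsto (fun δ => ∫ p in Q, smoothPos δ (g p) * w p ∂μ) (𝓝[>] 0)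
        (𝓝 (∫ p in Q, max (g p) 0 * w p ∂μ)) :=
    tendsto_setIntegral_mul hQ hw hw_supp hg.abs
      (Eventually.of_forall fun δ => (contDiff_smoothPos δ).continuous.comp_continuousOn hg)
      (eventually_nhdsWithin_of_forall fun δ hδ p _ => abs_smoothPos_le hδ (g p))
      (fun p _ => tendsto_smoothPos (g p))
  have hdiff : Tendsto (fun δ => ∫ p in Q, (smoothStep δ (φ p) - smoothStep δ (f p)) *
      (dirDeriv τ f p * ζ p) ∂μ) (𝓝[>] 0) (𝓝 (∫ p in Q, 0 * (dirDeriv τ f p * ζ p) ∂μ)) := by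
    refine tendsto_setIntegral_mul (b := fun _ => 1) hQ
      ((continuousOn_dirDeriv hQ hf).mul hζ.continuousOn) (hζ_supp.mul_left _) continuousOn_const
      (Eventually.of_forall fun δ => (hstep hφ.continuousOn δ).sub (hstep hf.continuousOn δ))
      (Eventually.of_forall fun δ p _ => abs_sub_le_of_nonneg_of_le
        (smoothStep_nonneg δ _) (smoothStep_le_one δ _) (smoothStep_nonneg δ _)
        (smoothStep_le_one δ _))
      (fun p hp => tendsto_const_nhds.congr' ?_)
    filter_upwards [eventually_smoothStep_eq (f p), eventually_smoothStep_eq (φ p)] with δ hfδ hφδ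
    simp only [hfδ, hφδ, hsign p hp, sub_self]
  simp only [zero_mul, integral_zero] at hdiff
  refine le_of_tendsto_of_tendsto hdiff
    ((hpos hf.continuousOn (continuousOn_dirDeriv hQ hζ₁) (hζ_supp.dirDeriv hQ)).add
      (hpos hφ.continuousOn (continuousOn_sumSqDeriv hQ hζ) (hζ_supp.sumSqDeriv hQ)))
    (eventually_nhdsWithin_of_forall fun δ hδ =>
      kato_regularized hδ hQ hf hφ hζ hζ_supp hζ_nonneg hsub)

theorem kato_inequality_sub_const {g : V → ℝ} {ε : ℝ} (hQ : IsOpen Q) (hf : ContDiffOn ℝ 1 f Q)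
    (hφ : ContDiffOn ℝ 2 φ Q) (hζ : ContDiffOn ℝ 2 ζ Q) (hζ_supp : HasCompactSupportIn ζ Q)
    (hζ_nonneg : ∀ p ∈ Q, 0 ≤ ζ p) (hsub : ∀ p ∈ Q, dirDeriv τ f p ≤ sumSqDeriv e φ p)
    (hsign : ∀ p ∈ Q, 0 < f p ↔ 0 < φ p) (hg : IntegrableOn g Q μ)
    (hle : ∀ p ∈ Q,
      (max (f p) 0 - ε) * dirDeriv τ ζ p + (max (φ p) 0 - ε) * sumSqDeriv e ζ p ≤ g p) :
    0 ≤ ∫ p in Q, g p ∂μ := by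
  have hint {h w : V → ℝ} (hh : ContinuousOn h Q) (hw : ContinuousOn w Q)
      (hw_supp : HasCompactSupportIn w Q) :
      IntegrableOn (fun p => (max (h p) 0 - ε) * w p) Q μ :=
    (hw_supp.mul_left _).integrableOn hQ
      (((hh.sup continuousOn_const).sub continuousOn_const).mul hw)
  have hshift {h w : V → ℝ} (hh : ContinuousOn h Q) (hw : ContinuousOn w Q)
      (hw_supp : HasCompactSupportIn w Q) (hw_zero : ∫ p in Q, w p ∂μ = 0) :
      ∫ p in Q, (max (h p) 0 - ε) * w p ∂μ = ∫ p in Q, max (h p) 0 * w p ∂μ := by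
    simp only [sub_mul]
    rw [integral_sub ((hw_supp.mul_left _).integrableOn hQ ((hh.sup continuousOn_const).mul hw))
      ((hw_supp.integrableOn hQ hw).const_mul ε), integral_const_mul, hw_zero, mul_zero, sub_zero]
  have hζ₁ : ContDiffOn ℝ 1 ζ Q := hζ.of_le one_le_two
  have hτ : ContinuousOn (dirDeriv τ ζ) Q := continuousOn_dirDeriv hQ hζ₁
  have he : ContinuousOn (sumSqDeriv e ζ) Q := continuousOn_sumSqDeriv hQ hζ
  have hτ_int := hint hf.continuousOn hτ (hζ_supp.dirDeriv hQ)
  have he_int := hint hφ.continuousOn he (hζ_supp.sumSqDeriv hQ)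
  calc (0 : ℝ) ≤ ∫ p in Q, max (f p) 0 * dirDeriv τ ζ p ∂μ +
        ∫ p in Q, max (φ p) 0 * sumSqDeriv e ζ p ∂μ :=
        kato_inequality hQ hf hφ hζ hζ_supp hζ_nonneg hsub hsign
    _ = ∫ p in Q, ((max (f p) 0 - ε) * dirDeriv τ ζ p +
          (max (φ p) 0 - ε) * sumSqDeriv e ζ p) ∂μ := by
        rw [integral_add hτ_int he_int,
          hshift hf.continuousOn hτ (hζ_supp.dirDeriv hQ)
            (hζ_supp.setIntegral_dirDeriv_eq_zero hQ hζ₁),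
          hshift hφ.continuousOn he (hζ_supp.sumSqDeriv hQ)
            (setIntegral_sumSqDeriv_eq_zero hQ hζ hζ_supp)]
    _ ≤ ∫ p in Q, g p ∂μ := setIntegral_mono_on (hτ_int.add he_int) hg hQ.measurableSet hle

end Kato

section SpaceTime

variable {E : Type*} [NormedAddCommGroup E] [NormedSpace ℝ E] {ι : Type*} [Fintype ι]
  {F : ℝ × E → ℝ} {t : ℝ} {x : E} {e : ι → E}

theorem dirDeriv_time_eq_deriv (hF : DifferentiableAt ℝ F (t, x)) :
    dirDeriv (1, 0) F (t, x) = deriv (fun r => F (r, x)) t :=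
  (HasFDerivAt.comp_hasDerivAt t hF.hasFDerivAt
    ((hasDerivAt_id t).prodMk (hasDerivAt_const t x))).deriv.symm

theorem dirDeriv_space_eq_dirDeriv {v : E} (hF : DifferentiableAt ℝ F (t, x)) :
    dirDeriv (0, v) F (t, x) = dirDeriv v (fun y => F (t, y)) x := by
  have hslice : HasFDerivAt (fun y => F (t, y))
      ((fderiv ℝ F (t, x)).comp (ContinuousLinearMap.inr ℝ ℝ E)) x :=
    hF.hasFDerivAt.comp x (hasFDerivAt_prodMk_right t x)
  simp only [dirDeriv, hslice.fderiv, ContinuousLinearMap.comp_apply,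
    ContinuousLinearMap.inr_apply]

theorem sumSqDeriv_space_eq_sumSqDeriv (hF : ContDiffAt ℝ 2 F (t, x)) :
    sumSqDeriv (fun i => ((0 : ℝ), e i)) F (t, x) = sumSqDeriv e (fun y => F (t, y)) x := by
  have hcont : Tendsto (fun y => (t, y)) (𝓝 x) (𝓝 (t, x)) :=
    (Continuous.prodMk_right t).tendsto x
  refine Finset.sum_congr rfl fun i _ => ?_
  rw [dirDeriv_space_eq_dirDeriv (differentiableAt_dirDeriv hF)]
  refine dirDeriv_congr ?_
  filter_upwards [hcont.eventually (eventually_differentiableAt_of_contDiffAt hF)] with y hy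
    using dirDeriv_space_eq_dirDeriv hy

end SpaceTime

section Cutoff

variable {X : Type*} {s : X → ℝ} {T δ δ' : ℝ}

/-- The test function of the comparison argument: it cuts off near the initial time, near the final
time and near the boundary `{s = 0}`. The factor in `T - t` is a primitive, so that its time
derivative has a sign and yields `cutoffWeight`. -/
noncomputable def cutoff (δ T : ℝ) (s : X → ℝ) (p : ℝ × X) : ℝ :=
  smoothStep δ p.1 * smoothPos δ (T - p.1) * smoothPos δ (s p.2)

/-- The favourable part of the time derivative of `cutoff`, up to sign. -/
noncomputable def cutoffWeight (δ T : ℝ) (s : X → ℝ) (p : ℝ × X) : ℝ :=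
  smoothStep δ p.1 * smoothStep δ (T - p.1) * smoothPos δ (s p.2)

theorem cutoff_nonneg (hδ : 0 < δ) (p : ℝ × X) : 0 ≤ cutoff δ T s p :=
  mul_nonneg (mul_nonneg (smoothStep_nonneg _ _) (smoothPos_nonneg hδ _)) (smoothPos_nonneg hδ _)

theorem cutoffWeight_nonneg (hδ : 0 < δ) (p : ℝ × X) : 0 ≤ cutoffWeight δ T s p :=
  mul_nonneg (mul_nonneg (smoothStep_nonneg _ _) (smoothStep_nonneg _ _)) (smoothPos_nonneg hδ _)

theorem cutoffWeight_anti_scale (hδ : 0 < δ) (hδ' : δ ≤ δ') (p : ℝ × X) :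
    cutoffWeight δ' T s p ≤ cutoffWeight δ T s p := by
  have hδ'_pos : 0 < δ' := hδ.trans_le hδ'
  exact mul_le_mul
    (mul_le_mul (smoothStep_anti_scale hδ hδ' _) (smoothStep_anti_scale hδ hδ' _)
      (smoothStep_nonneg _ _) (smoothStep_nonneg _ _))
    (smoothPos_anti_scale hδ hδ' _) (smoothPos_nonneg hδ'_pos _)
    (mul_nonneg (smoothStep_nonneg _ _) (smoothStep_nonneg _ _))

theorem cutoffWeight_le (hδ : 0 < δ) {p : ℝ × X} (hs : 0 ≤ s p.2) :
    cutoffWeight δ T s p ≤ s p.2 :=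
  (mul_le_of_le_one_left (smoothPos_nonneg hδ _) (mul_le_one₀ (smoothStep_le_one _ _)
    (smoothStep_nonneg _ _) (smoothStep_le_one _ _))).trans (smoothPos_le_self hs)

theorem continuous_cutoffWeight [TopologicalSpace X] (hs : Continuous s) :
    Continuous (cutoffWeight δ T s) := by
  have hstep := continuous_smoothStep δ
  have hpos := (contDiff_smoothPos δ).continuous
  unfold cutoffWeight
  fun_prop

end Cutoff

section Barrier

variable {E : Type*} [NormedAddCommGroup E] [NormedSpace ℝ E] {ι : Type*} [Fintype ι]
  {e : ι → E} {D : Set E} {s : E → ℝ} {T δ : ℝ}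

/-- A superharmonic weight, with respect to the operator `sumSqDeriv e`, that is positive in `D` and
nonpositive on its frontier. It plays the part of a first Dirichlet eigenfunction of `D`. -/
structure IsBarrier (e : ι → E) (D : Set E) (s : E → ℝ) : Prop where
  contDiff : ContDiff ℝ 2 s
  pos : ∀ x ∈ D, 0 < s x
  nonpos_of_mem_frontier : ∀ x ∈ frontier D, s x ≤ 0
  sumSqDeriv_nonpos : ∀ x ∈ D, sumSqDeriv e s x ≤ 0

theorem contDiff_cutoff (hs : ContDiff ℝ 2 s) : ContDiff ℝ 2 (cutoff δ T s) := by
  have hstep : ContDiff ℝ 2 (smoothStep δ) :=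
    (contDiff_smoothStep δ).of_le (WithTop.coe_le_coe.2 le_top)
  have hpos : ContDiff ℝ 2 (smoothPos δ) :=
    (contDiff_smoothPos δ).of_le (WithTop.coe_le_coe.2 le_top)
  exact ((hstep.comp contDiff_fst).mul (hpos.comp (contDiff_const.sub contDiff_fst))).mul
    (hpos.comp (hs.comp contDiff_snd))

theorem dirDeriv_time_cutoff (hs : ContDiff ℝ 2 s) (p : ℝ × E) :
    dirDeriv (1, 0) (cutoff δ T s) p =
      deriv (smoothStep δ) p.1 * smoothPos δ (T - p.1) * smoothPos δ (s p.2) -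
        cutoffWeight δ T s p := by
  have hfinal : HasDerivAt (fun r => smoothPos δ (T - r)) (smoothStep δ (T - p.1) * -1) p.1 :=
    (hasDerivAt_smoothPos δ (T - p.1)).comp p.1 ((hasDerivAt_id p.1).const_sub T)
  have hprod := ((hasDerivAt_smoothStep δ p.1).mul hfinal).mul_const (smoothPos δ (s p.2))
  refine (dirDeriv_time_eq_deriv ((contDiff_cutoff hs).differentiable two_ne_zero _)).trans
    (hprod.deriv.trans ?_)
  rw [cutoffWeight]
  ring

theorem sumSqDeriv_space_cutoff (hs : ContDiff ℝ 2 s) (p : ℝ × E) :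
    sumSqDeriv (fun i => ((0 : ℝ), e i)) (cutoff δ T s) p =
      smoothStep δ p.1 * smoothPos δ (T - p.1) *
        (deriv (smoothStep δ) (s p.2) * ∑ i, dirDeriv (e i) s p.2 ^ 2 +
          smoothStep δ (s p.2) * sumSqDeriv e s p.2) := by
  refine (sumSqDeriv_space_eq_sumSqDeriv (contDiff_cutoff hs).contDiffAt).trans ?_
  rw [← sumSqDeriv_comp (e := e) (hasDerivAt_smoothPos δ) (hasDerivAt_smoothStep δ _) hs.contDiffAt]
  exact sumSqDeriv_const_mul (e := e) (F := fun y => smoothPos δ (s y))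
    (smoothStep δ p.1 * smoothPos δ (T - p.1))

theorem mul_dirDeriv_time_cutoff_le {a ε : ℝ} {p : ℝ × E} (hδ : 0 < δ) (hε : 0 ≤ ε)
    (hs : ContDiff ℝ 2 s) (hs_nonneg : 0 ≤ s p.2) (hinit : p.1 < 2 * δ → a ≤ ε) :
    (a - ε) * dirDeriv (1, 0) (cutoff δ T s) p ≤ ε * s p.2 - a * cutoffWeight δ T s p := by
  have hbad : (a - ε) * (deriv (smoothStep δ) p.1 * smoothPos δ (T - p.1) * smoothPos δ (s p.2))
      ≤ 0 := by
    rcases lt_or_ge p.1 (2 * δ) with hp | hp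
    · exact mul_nonpos_of_nonpos_of_nonneg (sub_nonpos.2 (hinit hp))
        (mul_nonneg (mul_nonneg (deriv_smoothStep_nonneg hδ _) (smoothPos_nonneg hδ _))
          (smoothPos_nonneg hδ _))
    · simp [deriv_smoothStep_of_two_mul_le hδ hp]
  have hweight := mul_le_mul_of_nonneg_left (cutoffWeight_le (T := T) hδ hs_nonneg) hε
  rw [dirDeriv_time_cutoff hs]
  linarith

theorem mul_sumSqDeriv_space_cutoff_le {a ε : ℝ} {p : ℝ × E} (hδ : 0 < δ) (hε : 0 ≤ ε)
    (ha : 0 ≤ a) (hs : ContDiff ℝ 2 s) (hsuper : sumSqDeriv e s p.2 ≤ 0) (hp : p.1 ∈ Icc 0 T)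
    (hbdry : s p.2 < 2 * δ → a ≤ ε) :
    (a - ε) * sumSqDeriv (fun i => ((0 : ℝ), e i)) (cutoff δ T s) p ≤
      ε * (T * -sumSqDeriv e s p.2) := by
  have hbad : (a - ε) * (deriv (smoothStep δ) (s p.2) * ∑ i, dirDeriv (e i) s p.2 ^ 2) ≤ 0 := by
    rcases lt_or_ge (s p.2) (2 * δ) with hsp | hsp
    · exact mul_nonpos_of_nonpos_of_nonneg (sub_nonpos.2 (hbdry hsp))
        (mul_nonneg (deriv_smoothStep_nonneg hδ _) (Finset.sum_nonneg fun _ _ => sq_nonneg _))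
    · simp [deriv_smoothStep_of_two_mul_le hδ hsp]
  have hgood : (a - ε) * (smoothStep δ (s p.2) * sumSqDeriv e s p.2) ≤ ε * -sumSqDeriv e s p.2 := by
    nlinarith [mul_nonneg (mul_nonneg ha (smoothStep_nonneg δ (s p.2))) (neg_nonneg.2 hsuper),
      mul_nonneg (mul_nonneg hε (neg_nonneg.2 hsuper)) (sub_nonneg.2 (smoothStep_le_one δ (s p.2)))]
  have htime_nonneg : 0 ≤ smoothStep δ p.1 * smoothPos δ (T - p.1) :=
    mul_nonneg (smoothStep_nonneg _ _) (smoothPos_nonneg hδ _)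
  have htime_le : smoothStep δ p.1 * smoothPos δ (T - p.1) ≤ T :=
    (mul_le_of_le_one_left (smoothPos_nonneg hδ _) (smoothStep_le_one _ _)).trans
      ((smoothPos_le_self (sub_nonneg.2 hp.2)).trans (sub_le_self T hp.1))
  calc _ = smoothStep δ p.1 * smoothPos δ (T - p.1) *
        ((a - ε) * (deriv (smoothStep δ) (s p.2) * ∑ i, dirDeriv (e i) s p.2 ^ 2) +
          (a - ε) * (smoothStep δ (s p.2) * sumSqDeriv e s p.2)) := by
        rw [sumSqDeriv_space_cutoff hs]
        ring
    _ ≤ smoothStep δ p.1 * smoothPos δ (T - p.1) * (ε * -sumSqDeriv e s p.2) :=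
        mul_le_mul_of_nonneg_left (by linarith) htime_nonneg
    _ ≤ T * (ε * -sumSqDeriv e s p.2) :=
        mul_le_mul_of_nonneg_right htime_le (mul_nonneg hε (neg_nonneg.2 hsuper))
    _ = _ := by ring

theorem IsBarrier.hasCompactSupportIn_cutoff [ProperSpace E] (hs : IsBarrier e D s)
    (hD_bdd : Bornology.IsBounded D) (hδ : 0 < δ) :
    HasCompactSupportIn (cutoff δ T s) (Ioo 0 T ×ˢ D) := by
  refine ⟨Icc δ (T - δ) ×ˢ (closure D ∩ s ⁻¹' Ici δ), ?_, ?_, ?_⟩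
  · rintro p ⟨hp₁, hp₂, hsp⟩
    refine ⟨⟨hδ.trans_le hp₁.1, by linarith [hp₁.2]⟩, ?_⟩
    by_contra hpD
    have hpF : p.2 ∈ frontier D := ⟨hp₂, fun hint => hpD (interior_subset hint)⟩
    exact (hδ.trans_le hsp).not_ge (hs.nonpos_of_mem_frontier _ hpF)
  · exact isCompact_Icc.prod
      (hD_bdd.isCompact_closure.inter_right (isClosed_Ici.preimage hs.contDiff.continuous))
  · rintro p ⟨hpQ, hpK⟩
    by_contra hne
    have hinit : ¬p.1 ≤ δ := fun h => hne (by simp [cutoff, smoothStep_of_le hδ h])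
    have hfinal : ¬T - p.1 ≤ δ := fun h => hne (by simp [cutoff, smoothPos_of_le hδ h])
    have hbdry : ¬s p.2 ≤ δ := fun h => hne (by simp [cutoff, smoothPos_of_le hδ h])
    exact hpK ⟨⟨by linarith, by linarith⟩, subset_closure hpQ.2, (not_le.1 hbdry).le⟩

variable [FiniteDimensional ℝ E] [MeasurableSpace E] [BorelSpace E] {μ : Measure (ℝ × E)}
  [μ.IsAddHaarMeasure] {f φ : ℝ × E → ℝ} {ε : ℝ}

theorem IsBarrier.setIntegral_max_mul_cutoffWeight_le {B : ℝ} (hs : IsBarrier e D s)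
    (hD : IsOpen D) (hD_bdd : Bornology.IsBounded D)
    (hf_cont : ContinuousOn f (Icc 0 T ×ˢ closure D)) (hf : ContDiffOn ℝ 1 f (Ioo 0 T ×ˢ D))
    (hφ : ContDiffOn ℝ 2 φ (Ioo 0 T ×ˢ D))
    (hsub : ∀ p ∈ Ioo 0 T ×ˢ D,
      dirDeriv (1, 0) f p ≤ sumSqDeriv (fun i => ((0 : ℝ), e i)) φ p)
    (hsign : ∀ p ∈ Ioo 0 T ×ˢ D, 0 < f p ↔ 0 < φ p) (hδ : 0 < δ) (hε : 0 ≤ ε)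
    (hinit : ∀ p ∈ Ioo 0 T ×ˢ D, p.1 < 2 * δ → f p ≤ ε)
    (hbdry : ∀ p ∈ Ioo 0 T ×ˢ D, s p.2 < 2 * δ → φ p ≤ ε)
    (hB : ∀ x ∈ D, s x + T * -sumSqDeriv e s x ≤ B) :
    ∫ p in Ioo 0 T ×ˢ D, max (f p) 0 * cutoffWeight δ T s p ∂μ ≤
      ε * B * μ.real (Ioo 0 T ×ˢ D) := by
  set Q : Set (ℝ × E) := Ioo 0 T ×ˢ D
  have hQ : IsOpen Q := isOpen_Ioo.prod hD
  have hK : IsCompact (Icc 0 T ×ˢ closure D) := isCompact_Icc.prod hD_bdd.isCompact_closure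
  have hQK : Q ⊆ Icc 0 T ×ˢ closure D := prod_mono Ioo_subset_Icc_self subset_closure
  have hζ : ContDiffOn ℝ 2 (cutoff δ T s) Q := (contDiff_cutoff hs.contDiff).contDiffOn
  have hweight : IntegrableOn (fun p => max (f p) 0 * cutoffWeight δ T s p) Q μ :=
    ((hf_cont.sup continuousOn_const).mul
      (continuous_cutoffWeight hs.contDiff.continuous).continuousOn).integrableOn_compact hK
      |>.mono_set hQK
  have hconst : IntegrableOn (fun _ => ε * B) Q μ :=
    (continuousOn_const.integrableOn_compact hK).mono_set hQK
  have hkato : 0 ≤ ∫ p in Q, (ε * B - max (f p) 0 * cutoffWeight δ T s p) ∂μ := by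
    refine kato_inequality_sub_const (ε := ε) hQ hf hφ hζ (hs.hasCompactSupportIn_cutoff hD_bdd hδ)
      (fun p _ => cutoff_nonneg hδ p) hsub hsign (hconst.sub hweight) fun p hp => ?_
    have htime := mul_dirDeriv_time_cutoff_le (T := T) hδ hε hs.contDiff (hs.pos _ hp.2).le
      fun h => max_le (hinit p hp h) hε
    have hspace := mul_sumSqDeriv_space_cutoff_le hδ hε (le_max_right (φ p) 0) hs.contDiff
      (hs.sumSqDeriv_nonpos _ hp.2) (Ioo_subset_Icc_self hp.1)
      fun h => max_le (hbdry p hp h) hε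
    linarith [mul_le_mul_of_nonneg_left (hB _ hp.2) hε]
  rwa [integral_sub hconst hweight, setIntegral_const, smul_eq_mul, mul_comm, sub_nonneg] at hkato

end Barrier

section Comparison

theorem exists_pos_forall_lt_imp_lt {X : Type*} [TopologicalSpace X] {K : Set X} {g ψ : X → ℝ}
    {ε : ℝ} (hK : IsCompact K) (hg : ContinuousOn g K) (hψ : ContinuousOn ψ K)
    (h : ∀ p ∈ K, ψ p ≤ 0 → g p < ε) : ∃ δ > 0, ∀ p ∈ K, ψ p < δ → g p < ε := by
  have hpos : ∀ p ∈ K, 0 < max (ψ p) (ε - g p) := fun p hp =>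
    lt_max_iff.2 ((lt_or_ge 0 (ψ p)).imp_right fun hp' => sub_pos.2 (h p hp hp'))
  obtain ⟨δ, hδ, hle⟩ := hK.exists_forall_le' (hψ.sup (continuousOn_const.sub hg)) hpos
  exact ⟨δ, hδ, fun p hp hlt =>
    sub_pos.1 (hδ.trans_le ((le_max_iff.1 (hle p hp)).resolve_left hlt.not_ge))⟩

theorem cutoffWeight_pos {X : Type*} {s : X → ℝ} {T δ : ℝ} {p : ℝ × X} (hδ : 0 < δ)
    (hinit : 2 * δ ≤ p.1) (hfinal : 2 * δ ≤ T - p.1) (hs : 2 * δ < s p.2) :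
    0 < cutoffWeight δ T s p := by
  rw [cutoffWeight, smoothStep_of_two_mul_le hδ hinit, smoothStep_of_two_mul_le hδ hfinal, one_mul,
    one_mul]
  exact smoothPos_pos hδ hs

variable {E : Type*} [NormedAddCommGroup E] [NormedSpace ℝ E] [FiniteDimensional ℝ E]
  {ι : Type*} [Fintype ι] {e : ι → E} {D : Set E} {s : E → ℝ} {T δ ε : ℝ} {f φ : ℝ × E → ℝ}

theorem IsBarrier.exists_forall_add_mul_neg_sumSqDeriv_le (hs : IsBarrier e D s)
    (hD_bdd : Bornology.IsBounded D) (T : ℝ) :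
    ∃ B, ∀ x ∈ D, s x + T * -sumSqDeriv e s x ≤ B := by
  have hLs : Continuous (sumSqDeriv e s) :=
    continuousOn_univ.1 (continuousOn_sumSqDeriv isOpen_univ hs.contDiff.contDiffOn)
  have hcont : Continuous fun x => s x + T * -sumSqDeriv e s x :=
    hs.contDiff.continuous.add (continuous_const.mul hLs.neg)
  obtain ⟨B, hB⟩ := hD_bdd.isCompact_closure.bddAbove_image hcont.continuousOn
  exact ⟨B, fun x hx => hB (mem_image_of_mem _ (subset_closure hx))⟩

theorem IsBarrier.exists_scale (hs : IsBarrier e D s) (hD_bdd : Bornology.IsBounded D)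
    (hf_cont : ContinuousOn f (Icc 0 T ×ˢ closure D))
    (hφ_cont : ContinuousOn φ (Icc 0 T ×ˢ closure D))
    (hinit : ∀ x ∈ closure D, f (0, x) ≤ 0)
    (hbdry : ∀ p ∈ Icc 0 T ×ˢ frontier D, φ p ≤ 0) (hε : 0 < ε) (hδ : 0 < δ) :
    ∃ δ' ∈ Ioc 0 δ, ∀ p ∈ Ioo 0 T ×ˢ D,
      (p.1 < 2 * δ' → f p ≤ ε) ∧ (s p.2 < 2 * δ' → φ p ≤ ε) := by
  have hK : IsCompact (Icc 0 T ×ˢ closure D) := isCompact_Icc.prod hD_bdd.isCompact_closure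
  have hQK : Ioo 0 T ×ˢ D ⊆ Icc 0 T ×ˢ closure D := prod_mono Ioo_subset_Icc_self subset_closure
  have hinit' : ∀ p ∈ Icc 0 T ×ˢ closure D, p.1 ≤ 0 → f p < ε := by
    rintro ⟨t, x⟩ ⟨ht, hx⟩ ht'
    obtain rfl : t = 0 := le_antisymm ht' ht.1
    exact (hinit x hx).trans_lt hε
  have hbdry' : ∀ p ∈ Icc 0 T ×ˢ closure D, s p.2 ≤ 0 → φ p < ε := fun p hp hsp =>
    have hp_not_mem : p.2 ∉ interior D := fun hint =>
      (hs.pos _ (interior_subset hint)).not_ge hsp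
    (hbdry p ⟨hp.1, hp.2, hp_not_mem⟩).trans_lt hε
  obtain ⟨δ₁, hδ₁, hδ₁f⟩ :=
    exists_pos_forall_lt_imp_lt hK hf_cont continuous_fst.continuousOn hinit'
  obtain ⟨δ₂, hδ₂, hδ₂φ⟩ := exists_pos_forall_lt_imp_lt hK hφ_cont
    (hs.contDiff.continuous.comp continuous_snd).continuousOn hbdry'
  refine ⟨min δ (min (δ₁ / 2) (δ₂ / 2)), ⟨by positivity, min_le_left _ _⟩, fun p hp =>
    ⟨fun h => (hδ₁f p (hQK hp) ?_).le, fun h => (hδ₂φ p (hQK hp) ?_).le⟩⟩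
  · linarith [(min_le_right δ (min (δ₁ / 2) (δ₂ / 2))).trans (min_le_left _ _)]
  · change s p.2 < δ₂
    linarith [(min_le_right δ (min (δ₁ / 2) (δ₂ / 2))).trans (min_le_right _ _)]

theorem IsBarrier.setIntegral_max_mul_cutoffWeight_nonpos [MeasurableSpace E] [BorelSpace E]
    {μ : Measure (ℝ × E)} [μ.IsAddHaarMeasure] (hs : IsBarrier e D s)
    (hD : IsOpen D) (hD_bdd : Bornology.IsBounded D)
    (hf_cont : ContinuousOn f (Icc 0 T ×ˢ closure D))
    (hφ_cont : ContinuousOn φ (Icc 0 T ×ˢ closure D))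
    (hf : ContDiffOn ℝ 1 f (Ioo 0 T ×ˢ D)) (hφ : ContDiffOn ℝ 2 φ (Ioo 0 T ×ˢ D))
    (hsub : ∀ p ∈ Ioo 0 T ×ˢ D,
      dirDeriv (1, 0) f p ≤ sumSqDeriv (fun i => ((0 : ℝ), e i)) φ p)
    (hsign : ∀ p ∈ Ioo 0 T ×ˢ D, 0 < f p ↔ 0 < φ p)
    (hinit : ∀ x ∈ closure D, f (0, x) ≤ 0)
    (hbdry : ∀ p ∈ Icc 0 T ×ˢ frontier D, φ p ≤ 0) (hδ : 0 < δ) :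
    ∫ p in Ioo 0 T ×ˢ D, max (f p) 0 * cutoffWeight δ T s p ∂μ ≤ 0 := by
  have hK : IsCompact (Icc 0 T ×ˢ closure D) := isCompact_Icc.prod hD_bdd.isCompact_closure
  have hint (δ : ℝ) :
      IntegrableOn (fun p => max (f p) 0 * cutoffWeight δ T s p) (Ioo 0 T ×ˢ D) μ :=
    ((hf_cont.sup continuousOn_const).mul
      (continuous_cutoffWeight hs.contDiff.continuous).continuousOn).integrableOn_compact hK
      |>.mono_set (prod_mono Ioo_subset_Icc_self subset_closure)
  obtain ⟨B, hB⟩ := hs.exists_forall_add_mul_neg_sumSqDeriv_le hD_bdd T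
  have hle (ε : ℝ) (hε : 0 < ε) : ∫ p in Ioo 0 T ×ˢ D, max (f p) 0 * cutoffWeight δ T s p ∂μ ≤
      ε * B * μ.real (Ioo 0 T ×ˢ D) := by
    obtain ⟨δ', ⟨hδ', hδ'δ⟩, hsmall⟩ := hs.exists_scale hD_bdd hf_cont hφ_cont hinit hbdry hε hδ
    refine le_trans (integral_mono (hint δ) (hint δ') fun p => ?_)
      (hs.setIntegral_max_mul_cutoffWeight_le hD hD_bdd hf_cont hf hφ hsub hsign hδ' hε.le
        (fun p hp => (hsmall p hp).1) (fun p hp => (hsmall p hp).2) hB)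
    exact mul_le_mul_of_nonneg_left (cutoffWeight_anti_scale hδ' hδ'δ p) (le_max_right _ _)
  have hlim : Tendsto (fun ε => ε * B * μ.real (Ioo 0 T ×ˢ D)) (𝓝[>] 0) (𝓝 0) := by
    refine Tendsto.mono_left (Continuous.tendsto' (by fun_prop) _ _ ?_) nhdsWithin_le_nhds
    rw [zero_mul, zero_mul]
  exact ge_of_tendsto hlim (eventually_mem_nhdsWithin.mono hle)

theorem eqOn_zero_of_setIntegral_nonpos {X : Type*} [TopologicalSpace X] [MeasurableSpace X]
    [OpensMeasurableSpace X] {μ : Measure X} [μ.IsOpenPosMeasure] {Q : Set X} {h : X → ℝ}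
    (hQ : IsOpen Q) (hcont : ContinuousOn h Q) (hint : IntegrableOn h Q μ)
    (hnonneg : ∀ p ∈ Q, 0 ≤ h p) (hle : ∫ p in Q, h p ∂μ ≤ 0) : EqOn h 0 Q := by
  have hnonneg_ae : 0 ≤ᵐ[μ.restrict Q] h := ae_restrict_of_forall_mem hQ.measurableSet hnonneg
  have hzero : h =ᵐ[μ.restrict Q] 0 := (setIntegral_eq_zero_iff_of_nonneg_ae hnonneg_ae hint).1
    (hle.antisymm (setIntegral_nonneg hQ.measurableSet hnonneg))
  exact Measure.eqOn_open_of_ae_eq hzero hQ hcont continuousOn_const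

theorem IsBarrier.nonpos_of_subsolution (hs : IsBarrier e D s) (hD : IsOpen D)
    (hD_bdd : Bornology.IsBounded D) (hf_cont : ContinuousOn f (Icc 0 T ×ˢ closure D))
    (hφ_cont : ContinuousOn φ (Icc 0 T ×ˢ closure D))
    (hf : ContDiffOn ℝ 1 f (Ioo 0 T ×ˢ D)) (hφ : ContDiffOn ℝ 2 φ (Ioo 0 T ×ˢ D))
    (hsub : ∀ p ∈ Ioo 0 T ×ˢ D,
      deriv (fun t => f (t, p.2)) p.1 ≤ sumSqDeriv e (fun x => φ (p.1, x)) p.2)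
    (hsign : ∀ p ∈ Ioo 0 T ×ˢ D, 0 < f p ↔ 0 < φ p)
    (hinit : ∀ x ∈ closure D, f (0, x) ≤ 0)
    (hbdry : ∀ p ∈ Icc 0 T ×ˢ frontier D, φ p ≤ 0) : ∀ p ∈ Ioo 0 T ×ˢ D, f p ≤ 0 := by
  borelize E
  intro p hp
  have hQ : IsOpen (Ioo 0 T ×ˢ D) := isOpen_Ioo.prod hD
  have hsub' : ∀ q ∈ Ioo 0 T ×ˢ D,
      dirDeriv (1, 0) f q ≤ sumSqDeriv (fun i => ((0 : ℝ), e i)) φ q := fun q hq => by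
    rw [dirDeriv_time_eq_deriv (differentiableAt_of_contDiffOn hQ hf one_ne_zero hq),
      sumSqDeriv_space_eq_sumSqDeriv (hφ.contDiffAt (hQ.mem_nhds hq))]
    exact hsub q hq
  obtain ⟨δ, hδ, hδp⟩ : ∃ δ > 0, 2 * δ < min (min p.1 (T - p.1)) (s p.2) := by
    have hmin : 0 < min (min p.1 (T - p.1)) (s p.2) :=
      lt_min (lt_min hp.1.1 (sub_pos.2 hp.1.2)) (hs.pos _ hp.2)
    exact ⟨_, div_pos hmin three_pos, by linarith⟩
  simp only [lt_min_iff] at hδp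
  have hcont : ContinuousOn (fun q => max (f q) 0 * cutoffWeight δ T s q)
      (Icc 0 T ×ˢ closure D) := (hf_cont.sup continuousOn_const).mul
    (continuous_cutoffWeight hs.contDiff.continuous).continuousOn
  have hQK : Ioo 0 T ×ˢ D ⊆ Icc 0 T ×ˢ closure D := prod_mono Ioo_subset_Icc_self subset_closure
  have hK : IsCompact (Icc 0 T ×ˢ closure D) := isCompact_Icc.prod hD_bdd.isCompact_closure
  have hzero : max (f p) 0 * cutoffWeight δ T s p = 0 :=
    eqOn_zero_of_setIntegral_nonpos (μ := Measure.addHaar) hQ (hcont.mono hQK)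
      ((hcont.integrableOn_compact hK).mono_set hQK)
      (fun q _ => mul_nonneg (le_max_right _ _) (cutoffWeight_nonneg hδ q))
      (hs.setIntegral_max_mul_cutoffWeight_nonpos hD hD_bdd hf_cont hφ_cont hf hφ hsub' hsign
        hinit hbdry hδ) hp
  have hweight : cutoffWeight δ T s p ≠ 0 :=
    (cutoffWeight_pos hδ hδp.1.1.le hδp.1.2.le hδp.2).ne'
  exact max_eq_right_iff.1 ((mul_eq_zero.1 hzero).resolve_right hweight)

end Comparison

section EuclideanLaplacian

variable {E : Type*} [NormedAddCommGroup E] [InnerProductSpace ℝ E] {ι : Type*} [Fintype ι]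
  {F : E → ℝ} {x : E}

theorem dirDeriv_comp_affineIsometryEquiv {v : E} (σ : E ≃ᵃⁱ[ℝ] E)
    (hF : DifferentiableAt ℝ F (σ x)) :
    dirDeriv v (fun y => F (σ y)) x = dirDeriv (σ.linearIsometryEquiv v) F (σ x) := by
  let A : E →ᴬ[ℝ] E := ⟨σ.toAffineEquiv.toAffineMap, σ.continuous⟩
  have hcomp : HasFDerivAt (fun y => F (σ y)) ((fderiv ℝ F (σ x)).comp A.contLinear) x :=
    hF.hasFDerivAt.comp x A.hasFDerivAt
  rw [dirDeriv, hcomp.fderiv]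
  rfl

theorem sumSqDeriv_eq_laplacian [FiniteDimensional ℝ E] (b : OrthonormalBasis ι ℝ E)
    (hF : ContDiffAt ℝ 2 F x) : sumSqDeriv b F x = Laplacian.laplacian F x := by
  have hF' : DifferentiableAt ℝ (fderiv ℝ F) x :=
    (hF.fderiv_right one_add_one_eq_two.le).differentiableAt one_ne_zero
  rw [InnerProductSpace.laplacian_eq_iteratedFDeriv_orthonormalBasis F b]
  refine Finset.sum_congr rfl fun i _ => ?_
  rw [iteratedFDeriv_two_apply]
  change fderiv ℝ (fun y => fderiv ℝ F y (b i)) x (b i) = _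
  rw [fderiv_clm_apply hF' (differentiableAt_const _)]
  simp

theorem contDiff_affineIsometryEquiv {n : WithTop ℕ∞} (σ : E ≃ᵃⁱ[ℝ] E) : ContDiff ℝ n σ :=
  ContinuousAffineMap.contDiff ⟨σ.toAffineEquiv.toAffineMap, σ.continuous⟩

theorem sumSqDeriv_comp_affineIsometryEquiv [FiniteDimensional ℝ E] (b : OrthonormalBasis ι ℝ E)
    (σ : E ≃ᵃⁱ[ℝ] E) (hF : ContDiffAt ℝ 2 F (σ x)) :
    sumSqDeriv b (fun y => F (σ y)) x = sumSqDeriv b F (σ x) := by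
  have hmap : sumSqDeriv b (fun y => F (σ y)) x =
      sumSqDeriv (b.map σ.linearIsometryEquiv) F (σ x) := by
    refine Finset.sum_congr rfl fun i _ => ?_
    rw [OrthonormalBasis.map_apply,
      ← dirDeriv_comp_affineIsometryEquiv σ (differentiableAt_dirDeriv hF)]
    refine dirDeriv_congr ?_
    filter_upwards [σ.continuous.continuousAt.eventually
      (eventually_differentiableAt_of_contDiffAt hF)] with y hy
      using dirDeriv_comp_affineIsometryEquiv σ hy
  rw [hmap, sumSqDeriv_eq_laplacian _ hF, sumSqDeriv_eq_laplacian _ hF]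

theorem contDiff_dist_sq (c : E) : ContDiff ℝ 2 fun x => dist x c ^ 2 := by
  simp only [dist_eq_norm]
  exact (contDiff_id.sub contDiff_const).norm_sq ℝ

theorem dirDeriv_dist_sq (c v : E) :
    dirDeriv v (fun x => dist x c ^ 2) = fun x => 2 * inner ℝ (x - c) v := by
  funext x
  have hsub : HasFDerivAt (fun y => y - c) (ContinuousLinearMap.id ℝ E) x :=
    (hasFDerivAt_id x).sub_const c
  simp only [dist_eq_norm, dirDeriv, hsub.norm_sq.fderiv]
  simp [inner_sub_left]

theorem sumSqDeriv_dist_sq (b : OrthonormalBasis ι ℝ E) (c : E) :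
    sumSqDeriv b (fun x => dist x c ^ 2) x = 2 * Fintype.card ι := by
  have hsecond (i : ι) : dirDeriv (b i) (fun y => 2 * inner ℝ (y - c) (b i)) x = 2 := by
    have hsub : HasFDerivAt (fun y => y - c) (ContinuousLinearMap.id ℝ E) x :=
      (hasFDerivAt_id x).sub_const c
    rw [dirDeriv_const_mul]
    simp only [dirDeriv, (hsub.inner ℝ (hasFDerivAt_const (b i) x)).fderiv]
    simp
  simp only [sumSqDeriv, dirDeriv_dist_sq, hsecond, Finset.sum_const, Finset.card_univ,
    nsmul_eq_mul]
  ring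

end EuclideanLaplacian

section Cap

variable {X : Type*} [PseudoMetricSpace X] {x₀ x₂ x : X} {ρ : ℝ}

/-- The part of the ball around `x₀` on the side of `x₂` of the perpendicular bisector. -/
def reflectionCap (x₀ x₂ : X) (ρ : ℝ) : Set X :=
  ball x₀ ρ ∩ {x | dist x x₂ < dist x x₀}

theorem isOpen_reflectionCap : IsOpen (reflectionCap x₀ x₂ ρ) :=
  isOpen_ball.inter (isOpen_lt (by fun_prop) (by fun_prop))

theorem closure_reflectionCap_subset :
    closure (reflectionCap x₀ x₂ ρ) ⊆ closedBall x₀ ρ ∩ {x | dist x x₂ ≤ dist x x₀} :=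
  closure_minimal (inter_subset_inter ball_subset_closedBall fun _ => le_of_lt (α := ℝ))
    (isClosed_closedBall.inter (isClosed_le (by fun_prop) (by fun_prop)))

theorem mem_sphere_or_dist_eq_of_mem_frontier (hx : x ∈ frontier (reflectionCap x₀ x₂ ρ)) :
    x ∈ sphere x₀ ρ ∨ dist x x₂ = dist x x₀ := by
  obtain ⟨hball, hside⟩ := closure_reflectionCap_subset hx.1
  by_contra! hne
  refine hx.2 ?_
  rw [isOpen_reflectionCap.interior_eq]
  exact ⟨lt_of_le_of_ne hball hne.1, lt_of_le_of_ne hside hne.2⟩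

end Cap

section Reflection

variable {E : Type*} [NormedAddCommGroup E] [InnerProductSpace ℝ E] {x₀ x₂ x : E} {ρ : ℝ}

instance (x₀ x₂ : E) : Nonempty (AffineSubspace.perpBisector x₀ x₂) :=
  AffineSubspace.perpBisector_nonempty.to_subtype

instance (x₀ x₂ : E) :
    (AffineSubspace.perpBisector x₀ x₂).direction.HasOrthogonalProjection := by
  rw [AffineSubspace.direction_perpBisector]
  infer_instance

/-- The reflection in the perpendicular bisector of two points, which exchanges them. -/
noncomputable def bisectorReflection (x₀ x₂ : E) : E ≃ᵃⁱ[ℝ] E :=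
  EuclideanGeometry.reflection (AffineSubspace.perpBisector x₀ x₂)

theorem bisectorReflection_right (x₀ x₂ : E) : bisectorReflection x₀ x₂ x₂ = x₀ := by
  have hnormal : x₂ -ᵥ midpoint ℝ x₀ x₂ ∈ (AffineSubspace.perpBisector x₀ x₂).directionᗮ := by
    rw [AffineSubspace.direction_perpBisector, right_vsub_midpoint]
    exact Submodule.le_orthogonal_orthogonal _
      (Submodule.smul_mem _ _ (Submodule.mem_span_singleton_self _))
  have hreflect := EuclideanGeometry.reflection_orthogonal_vadd
    (AffineSubspace.midpoint_mem_perpBisector x₀ x₂) hnormal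
  rw [vsub_vadd] at hreflect
  rw [bisectorReflection, hreflect, neg_vsub_eq_vsub_rev, midpoint_vsub_right, ← left_vsub_midpoint,
    vsub_vadd]

theorem bisectorReflection_eq_self (hx : dist x x₂ = dist x x₀) :
    bisectorReflection x₀ x₂ x = x :=
  (EuclideanGeometry.reflection_eq_self_iff x).2
    (AffineSubspace.mem_perpBisector_iff_dist_eq.2 hx.symm)

theorem dist_bisectorReflection (x₀ x₂ x : E) :
    dist (bisectorReflection x₀ x₂ x) x₀ = dist x x₂ := by
  rw [← (bisectorReflection x₀ x₂).dist_map x x₂, bisectorReflection_right]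

theorem bisectorReflection_mem_ball (hx : x ∈ reflectionCap x₀ x₂ ρ) :
    bisectorReflection x₀ x₂ x ∈ ball x₀ ρ := by
  rw [mem_ball, dist_bisectorReflection]
  exact hx.2.trans hx.1

theorem bisectorReflection_mem_closedBall (hx : x ∈ closure (reflectionCap x₀ x₂ ρ)) :
    bisectorReflection x₀ x₂ x ∈ closedBall x₀ ρ := by
  obtain ⟨hball, hside⟩ := closure_reflectionCap_subset hx
  rw [mem_closedBall, dist_bisectorReflection]
  exact hside.trans hball

/-- The product of the two quadratic polynomials whose zero sets contain the two parts of the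
boundary of the cap; the second one is in fact affine. -/
noncomputable def capBarrier (x₀ x₂ : E) (ρ : ℝ) (x : E) : ℝ :=
  (ρ ^ 2 - dist x x₀ ^ 2) * (dist x x₀ ^ 2 - dist x x₂ ^ 2)

theorem sumSqDeriv_capBarrier {ι : Type*} [Fintype ι] (b : OrthonormalBasis ι ℝ E) :
    sumSqDeriv b (capBarrier x₀ x₂ ρ) x =
      -(2 * Fintype.card ι * (dist x x₀ ^ 2 - dist x x₂ ^ 2)) -
        8 * inner ℝ (x - x₀) (x₂ - x₀) := by
  have hball : ContDiffAt ℝ 2 (fun y : E => ρ ^ 2 - dist y x₀ ^ 2) x :=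
    contDiffAt_const.sub (contDiff_dist_sq x₀).contDiffAt
  have hside : ContDiffAt ℝ 2 (fun y : E => dist y x₀ ^ 2 - dist y x₂ ^ 2) x :=
    ((contDiff_dist_sq x₀).sub (contDiff_dist_sq x₂)).contDiffAt
  have hdiff (c : E) : DifferentiableAt ℝ (fun y : E => dist y c ^ 2) x :=
    (contDiff_dist_sq c).differentiable two_ne_zero x
  have hball_dirDeriv (v : E) :
      dirDeriv v (fun y => ρ ^ 2 - dist y x₀ ^ 2) x = -2 * inner ℝ (x - x₀) v := by
    rw [dirDeriv_sub (differentiableAt_const _) (hdiff x₀), dirDeriv_const, dirDeriv_dist_sq]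
    ring
  have hside_dirDeriv (v : E) :
      dirDeriv v (fun y => dist y x₀ ^ 2 - dist y x₂ ^ 2) x = 2 * inner ℝ v (x₂ - x₀) := by
    rw [dirDeriv_sub (hdiff x₀) (hdiff x₂), dirDeriv_dist_sq, dirDeriv_dist_sq, ← mul_sub,
      ← inner_sub_left, sub_sub_sub_cancel_left, real_inner_comm]
  have hcross : ∑ i, dirDeriv (b i) (fun y => ρ ^ 2 - dist y x₀ ^ 2) x *
      dirDeriv (b i) (fun y => dist y x₀ ^ 2 - dist y x₂ ^ 2) x =
        -4 * inner ℝ (x - x₀) (x₂ - x₀) := by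
    rw [← b.sum_inner_mul_inner, Finset.mul_sum]
    refine Finset.sum_congr rfl fun i _ => ?_
    rw [hball_dirDeriv, hside_dirDeriv]
    ring
  refine (sumSqDeriv_mul hball hside).trans ?_
  rw [hcross, sumSqDeriv_sub contDiffAt_const (contDiff_dist_sq x₀).contDiffAt, sumSqDeriv_const,
    sumSqDeriv_sub (contDiff_dist_sq x₀).contDiffAt (contDiff_dist_sq x₂).contDiffAt,
    sumSqDeriv_dist_sq, sumSqDeriv_dist_sq]
  ring

theorem isBarrier_capBarrier {ι : Type*} [Fintype ι] (b : OrthonormalBasis ι ℝ E) :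
    IsBarrier b (reflectionCap x₀ x₂ ρ) (capBarrier x₀ x₂ ρ) where
  contDiff := (contDiff_const.sub (contDiff_dist_sq x₀)).mul
    ((contDiff_dist_sq x₀).sub (contDiff_dist_sq x₂))
  pos x hx := mul_pos
    (sub_pos.2 (pow_lt_pow_left₀ hx.1 dist_nonneg two_ne_zero))
    (sub_pos.2 (pow_lt_pow_left₀ hx.2 dist_nonneg two_ne_zero))
  nonpos_of_mem_frontier x hx := by
    rcases mem_sphere_or_dist_eq_of_mem_frontier hx with hsphere | hdist
    · simp [capBarrier, mem_sphere.1 hsphere]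
    · simp [capBarrier, hdist]
  sumSqDeriv_nonpos x hx := by
    have hside : 0 < dist x x₀ ^ 2 - dist x x₂ ^ 2 :=
      sub_pos.2 (pow_lt_pow_left₀ hx.2 dist_nonneg two_ne_zero)
    have hinner : dist x x₂ ^ 2 =
        dist x x₀ ^ 2 - 2 * inner ℝ (x - x₀) (x₂ - x₀) + dist x₂ x₀ ^ 2 := by
      simp only [dist_eq_norm]
      rw [← norm_sub_sq_real, sub_sub_sub_cancel_right]
    rw [sumSqDeriv_capBarrier]
    have hcard : 0 ≤ 2 * (Fintype.card ι : ℝ) * (dist x x₀ ^ 2 - dist x x₂ ^ 2) := by positivity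
    linarith [sq_nonneg (dist x₂ x₀)]

end Reflection

section Annulus

theorem measure_ball_sdiff_ball_ne_zero {E : Type*} [NormedAddCommGroup E] [NormedSpace ℝ E]
    [Nontrivial E] [MeasurableSpace E] {μ : Measure E} [μ.IsOpenPosMeasure] {c : E} {r R : ℝ}
    (hr : 0 ≤ r) (hR : r < R) : μ (ball c R \ ball c r) ≠ 0 := by
  obtain ⟨ρ, hrρ, hρR⟩ := exists_between hR
  obtain ⟨x, hx⟩ : (sphere c ρ).Nonempty := NormedSpace.sphere_nonempty.2 (hr.trans hrρ.le)
  rw [mem_sphere] at hx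
  have hmem : x ∈ ball c R \ closedBall c r :=
    ⟨hx.trans_lt hρR, fun h => hrρ.not_ge (hx.ge.trans h)⟩
  have hpos : 0 < μ (ball c R \ closedBall c r) :=
    (isOpen_ball.sdiff isClosed_closedBall).measure_pos μ ⟨x, hmem⟩
  exact (hpos.trans_le (measure_mono (sdiff_subset_sdiff_right ball_subset_closedBall))).ne'

end Annulus

section ReflectedDifference

variable {E : Type*} [NormedAddCommGroup E] [InnerProductSpace ℝ E] {x₀ x₂ : E} {ρ : ℝ}
  {I : Set ℝ} {w : ℝ × E → ℝ}

theorem contDiffOn_sub_comp_bisectorReflection {n : WithTop ℕ∞}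
    (hw : ContDiffOn ℝ n w (I ×ˢ ball x₀ ρ)) :
    ContDiffOn ℝ n (fun p => w p - w (p.1, bisectorReflection x₀ x₂ p.2))
      (I ×ˢ reflectionCap x₀ x₂ ρ) :=
  (hw.mono (prod_mono_right inter_subset_left)).sub <|
    hw.comp (contDiff_fst.prodMk
      ((contDiff_affineIsometryEquiv (bisectorReflection x₀ x₂)).comp contDiff_snd)).contDiffOn
      fun _ hp => ⟨hp.1, bisectorReflection_mem_ball hp.2⟩

theorem continuousOn_sub_comp_bisectorReflection (hw : ContinuousOn w (I ×ˢ closedBall x₀ ρ)) :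
    ContinuousOn (fun p => w p - w (p.1, bisectorReflection x₀ x₂ p.2))
      (I ×ˢ closure (reflectionCap x₀ x₂ ρ)) :=
  (hw.mono (prod_mono_right (closure_reflectionCap_subset.trans inter_subset_left))).sub <|
    hw.comp (continuous_fst.prodMk
      ((bisectorReflection x₀ x₂).continuous.comp continuous_snd)).continuousOn
      fun _ hp => ⟨hp.1, bisectorReflection_mem_closedBall hp.2⟩

end ReflectedDifference

end FastDiffusion

open FastDiffusion

namespace IsFDESol

variable {d : ℕ} {m : ℝ} {Q : Set (ℝ × EuclideanSpace ℝ (Fin d))}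
  {u : ℝ → EuclideanSpace ℝ (Fin d) → ℝ} {p : ℝ × EuclideanSpace ℝ (Fin d)}

theorem contDiffOn_rpow (hu : IsFDESol m Q u) :
    ContDiffOn ℝ ∞ (fun p : ℝ × EuclideanSpace ℝ (Fin d) => u p.1 p.2 ^ m) Q :=
  hu.2.1.rpow_const_of_ne fun p hp => (hu.1 p hp).ne'

theorem differentiableAt_time (hu : IsFDESol m Q u) (hQ : IsOpen Q) (hp : p ∈ Q) :
    DifferentiableAt ℝ (fun t => u t p.2) p.1 :=
  (differentiableAt_of_contDiffOn hQ hu.2.1 (by simp) hp).comp (f := fun t => (t, p.2)) p.1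
    (by fun_prop)

theorem contDiffAt_rpow_space (hu : IsFDESol m Q u) (hQ : IsOpen Q) (hp : p ∈ Q) :
    ContDiffAt ℝ 2 (fun x => u p.1 x ^ m) p.2 :=
  ((hu.contDiffOn_rpow.contDiffAt (hQ.mem_nhds hp)).of_le (WithTop.coe_le_coe.2 le_top)).comp
    (f := fun x => (p.1, x)) p.2 (by fun_prop)

theorem deriv_eq_sumSqDeriv (hu : IsFDESol m Q u) (hp : p ∈ Q) :
    deriv (fun t => u t p.2) p.1 =
      sumSqDeriv (EuclideanSpace.basisFun (Fin d) ℝ) (fun x => u p.1 x ^ m) p.2 := by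
  simp only [hu.2.2 p hp, sumSqDeriv, EuclideanSpace.basisFun_apply]
  rfl

theorem deriv_sub_comp_affineIsometryEquiv (hu : IsFDESol m Q u) (hQ : IsOpen Q)
    (σ : EuclideanSpace ℝ (Fin d) ≃ᵃⁱ[ℝ] EuclideanSpace ℝ (Fin d)) (hp : p ∈ Q)
    (hσp : (p.1, σ p.2) ∈ Q) :
    deriv (fun t => u t p.2 - u t (σ p.2)) p.1 =
      sumSqDeriv (EuclideanSpace.basisFun (Fin d) ℝ)
        (fun x => u p.1 x ^ m - u p.1 (σ x) ^ m) p.2 := by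
  have hσ_time : DifferentiableAt ℝ (fun t => u t (σ p.2)) p.1 := hu.differentiableAt_time hQ hσp
  have hσ_rpow : ContDiffAt ℝ 2 (fun x => u p.1 x ^ m) (σ p.2) := hu.contDiffAt_rpow_space hQ hσp
  have hcomp_rpow : ContDiffAt ℝ 2 (fun x => u p.1 (σ x) ^ m) p.2 :=
    hσ_rpow.comp p.2 (contDiff_affineIsometryEquiv σ).contDiffAt
  rw [deriv_fun_sub (hu.differentiableAt_time hQ hp) hσ_time,
    sumSqDeriv_sub (hu.contDiffAt_rpow_space hQ hp) hcomp_rpow,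
    sumSqDeriv_comp_affineIsometryEquiv _ σ hσ_rpow, hu.deriv_eq_sumSqDeriv hp]
  exact congrArg _ (hu.deriv_eq_sumSqDeriv hσp)

end IsFDESol

namespace IsDirichletSol

variable {d : ℕ} {m ρ T t R₀ : ℝ} {x₀ x₂ x : EuclideanSpace ℝ (Fin d)}
  {u : ℝ → EuclideanSpace ℝ (Fin d) → ℝ} {u₀ : EuclideanSpace ℝ (Fin d) → ℝ}

theorem nonneg (hu : IsDirichletSol m x₀ ρ T u u₀) (ht : t ∈ Icc 0 T)
    (hx : x ∈ closedBall x₀ ρ) : 0 ≤ u t x :=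
  hu.1 t ht x hx

theorem continuousOn (hu : IsDirichletSol m x₀ ρ T u u₀) :
    ContinuousOn (fun p : ℝ × EuclideanSpace ℝ (Fin d) => u p.1 p.2)
      (Icc 0 T ×ˢ closedBall x₀ ρ) :=
  hu.2.1

theorem isFDESol (hu : IsDirichletSol m x₀ ρ T u u₀) : IsFDESol m (Ioo 0 T ×ˢ ball x₀ ρ) u :=
  hu.2.2.1

theorem eq_initial (hu : IsDirichletSol m x₀ ρ T u u₀) (hx : x ∈ ball x₀ ρ) : u 0 x = u₀ x :=
  hu.2.2.2.1 x hx

theorem eq_zero_of_mem_sphere (hu : IsDirichletSol m x₀ ρ T u u₀) (hT : 0 < T)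
    (ht : t ∈ Icc 0 T) (hx : x ∈ sphere x₀ ρ) : u t x = 0 := by
  have hcont : ContinuousOn (fun s => u s x) (Icc 0 T) :=
    hu.continuousOn.comp (f := fun s => (s, x)) (by fun_prop)
      fun s hs => ⟨hs, sphere_subset_closedBall hx⟩
  have hlateral : EqOn (fun s => u s x) (fun _ => 0) (Ioc 0 T) := fun s hs =>
    hu.2.2.2.2.1 s hs x hx
  exact hlateral.of_subset_closure hcont continuousOn_const Ioc_subset_Icc_self
    (closure_Ioc hT.ne).ge ht

theorem initial_le_bisectorReflection (hu : IsDirichletSol m x₀ ρ T u u₀) (hT : 0 < T)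
    (hsupp : Function.support u₀ ⊆ closedBall x₀ R₀) (hx₂ : 2 * R₀ ≤ dist x₂ x₀)
    (hx : x ∈ closure (reflectionCap x₀ x₂ ρ)) : u 0 x ≤ u 0 (bisectorReflection x₀ x₂ x) := by
  obtain ⟨hball, hside⟩ := closure_reflectionCap_subset hx
  by_cases hux : u 0 x = 0
  · rw [hux]
    exact hu.nonneg (left_mem_Icc.2 hT.le) (bisectorReflection_mem_closedBall hx)
  have hx_ball : x ∈ ball x₀ ρ := lt_of_le_of_ne hball fun hsphere =>
    hux (hu.eq_zero_of_mem_sphere hT (left_mem_Icc.2 hT.le) hsphere)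
  have hx_supp : dist x x₀ ≤ R₀ := hsupp fun h => hux ((hu.eq_initial hx_ball).trans h)
  have hdist : dist x x₂ = dist x x₀ :=
    le_antisymm hside (by linarith [dist_triangle_left x₂ x₀ x])
  rw [bisectorReflection_eq_self hdist]

theorem frontier_le_bisectorReflection (hu : IsDirichletSol m x₀ ρ T u u₀) (hT : 0 < T)
    (ht : t ∈ Icc 0 T) (hx : x ∈ frontier (reflectionCap x₀ x₂ ρ)) :
    u t x ≤ u t (bisectorReflection x₀ x₂ x) := by
  rcases mem_sphere_or_dist_eq_of_mem_frontier hx with hsphere | hdist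
  · rw [hu.eq_zero_of_mem_sphere hT ht hsphere]
    exact hu.nonneg ht (bisectorReflection_mem_closedBall hx.1)
  · rw [bisectorReflection_eq_self hdist]

theorem le_bisectorReflection (hu : IsDirichletSol m x₀ ρ T u u₀) (hm : 0 < m)
    (hsupp : Function.support u₀ ⊆ closedBall x₀ R₀) (hx₂ : 2 * R₀ ≤ dist x₂ x₀)
    (ht : t ∈ Ioo 0 T) (hx : x ∈ reflectionCap x₀ x₂ ρ) :
    u t x ≤ u t (bisectorReflection x₀ x₂ x) := by
  set σ := bisectorReflection x₀ x₂
  have hT : 0 < T := ht.1.trans ht.2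
  have hfde := hu.isFDESol
  have hQ : IsOpen (Ioo 0 T ×ˢ ball x₀ ρ) := isOpen_Ioo.prod isOpen_ball
  have hDQ : ∀ p ∈ Ioo 0 T ×ˢ reflectionCap x₀ x₂ ρ, p ∈ Ioo 0 T ×ˢ ball x₀ ρ := fun p hp =>
    ⟨hp.1, hp.2.1⟩
  have hσQ : ∀ p ∈ Ioo 0 T ×ˢ reflectionCap x₀ x₂ ρ, (p.1, σ p.2) ∈ Ioo 0 T ×ˢ ball x₀ ρ :=
    fun p hp => ⟨hp.1, bisectorReflection_mem_ball hp.2⟩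
  have hsign : ∀ p ∈ Ioo 0 T ×ˢ reflectionCap x₀ x₂ ρ,
      0 < u p.1 p.2 - u p.1 (σ p.2) ↔ 0 < u p.1 p.2 ^ m - u p.1 (σ p.2) ^ m := fun p hp => by
    rw [sub_pos, sub_pos, rpow_lt_rpow_iff (hfde.1 _ (hσQ p hp)).le (hfde.1 _ (hDQ p hp)).le hm]
  have hbdry : ∀ p ∈ Icc 0 T ×ˢ frontier (reflectionCap x₀ x₂ ρ),
      u p.1 p.2 ^ m - u p.1 (σ p.2) ^ m ≤ 0 := fun p hp =>
    sub_nonpos.2 <| rpow_le_rpow (hu.nonneg hp.1 (closure_reflectionCap_subset hp.2.1).1)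
      (hu.frontier_le_bisectorReflection hT hp.1 hp.2) hm.le
  have hbarrier := isBarrier_capBarrier (x₀ := x₀) (x₂ := x₂) (ρ := ρ)
    (EuclideanSpace.basisFun (Fin d) ℝ)
  exact sub_nonpos.1 <| hbarrier.nonpos_of_subsolution isOpen_reflectionCap
    (isBounded_ball.subset inter_subset_left)
    (continuousOn_sub_comp_bisectorReflection hu.continuousOn)
    (continuousOn_sub_comp_bisectorReflection
      (hu.continuousOn.rpow_const fun _ _ => Or.inr hm.le))
    (contDiffOn_sub_comp_bisectorReflection (hfde.2.1.of_le (WithTop.coe_le_coe.2 le_top)))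
    (contDiffOn_sub_comp_bisectorReflection
      (hfde.contDiffOn_rpow.of_le (WithTop.coe_le_coe.2 le_top)))
    (fun p hp => (hfde.deriv_sub_comp_affineIsometryEquiv hQ σ (hDQ p hp) (hσQ p hp)).le) hsign
    (fun y hy => sub_nonpos.2 (hu.initial_le_bisectorReflection hT hsupp hx₂ hy)) hbdry
    (t, x) ⟨ht, hx⟩

theorem le_center (hu : IsDirichletSol m x₀ ρ T u u₀) (hm : 0 < m) (hR₀ : 0 < R₀)
    (hsupp : Function.support u₀ ⊆ closedBall x₀ R₀) (ht : t ∈ Ioo 0 T)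
    (hx : x ∈ ball x₀ ρ \ ball x₀ (2 * R₀)) : u t x ≤ u t x₀ := by
  have hdist : 2 * R₀ ≤ dist x x₀ := not_lt.1 hx.2
  have hcap : x ∈ reflectionCap x₀ x ρ :=
    ⟨hx.1, (dist_self x).trans_lt (by linarith)⟩
  simpa only [bisectorReflection_right] using hu.le_bisectorReflection hm hsupp hdist ht hcap

theorem setAverage_le_center (hu : IsDirichletSol m x₀ ρ T u u₀) (hd : 1 ≤ d) (hm : 0 < m)
    (hR₀ : 0 < R₀) (hρ : 2 * R₀ < ρ) (hsupp : Function.support u₀ ⊆ closedBall x₀ R₀)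
    (ht : t ∈ Ioo 0 T) : ⨍ x in ball x₀ ρ \ ball x₀ (2 * R₀), u t x ≤ u t x₀ := by
  have : Nonempty (Fin d) := Fin.pos_iff_nonempty.1 hd
  have hannulus : ball x₀ ρ \ ball x₀ (2 * R₀) ⊆ closedBall x₀ ρ :=
    sdiff_subset.trans ball_subset_closedBall
  have hcont : ContinuousOn (u t) (closedBall x₀ ρ) :=
    hu.continuousOn.comp (f := fun x => (t, x)) (by fun_prop)
      fun x hx => ⟨Ioo_subset_Icc_self ht, hx⟩
  obtain ⟨x, hx, haverage⟩ := exists_setAverage_le (μ := volume)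
    (measure_ball_sdiff_ball_ne_zero (by positivity) hρ)
    (measure_ne_top_of_subset hannulus measure_closedBall_lt_top.ne)
    ((hcont.integrableOn_compact (isCompact_closedBall x₀ ρ)).mono_set hannulus)
  exact haverage.trans (hu.le_center hm hR₀ hsupp ht hx)

end IsDirichletSol

theorem aleksandrov_reflection_general {d : ℕ} (hd : 1 ≤ d) {m : ℝ} (hm : 0 < m)
    {x₀ : EuclideanSpace ℝ (Fin d)} {R₀ lam T : ℝ} (hR₀ : 0 < R₀) (hlam : 2 < lam)
    {u : ℝ → EuclideanSpace ℝ (Fin d) → ℝ} {u₀ : EuclideanSpace ℝ (Fin d) → ℝ}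
    (hsupp : Function.support u₀ ⊆ closedBall x₀ R₀)
    (hsol : IsDirichletSol m x₀ (lam * R₀) T u u₀) :
    (∀ t ∈ Ioo (0 : ℝ) T, ∀ x₂ ∈ ball x₀ (lam * R₀) \ ball x₀ (2 * R₀),
      u t x₂ ≤ u t x₀) ∧
    ∀ t ∈ Ioo (0 : ℝ) T,
      (volume (ball x₀ (lam * R₀) \ ball x₀ (2 * R₀))).toReal⁻¹ *
        ∫ x in ball x₀ (lam * R₀) \ ball x₀ (2 * R₀), u t x ≤ u t x₀ := by
  refine ⟨fun t ht x₂ hx₂ => hsol.le_center hm hR₀ hsupp ht hx₂, fun t ht => ?_⟩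
  have haverage := hsol.setAverage_le_center hd hm hR₀ (mul_lt_mul_of_pos_right hlam hR₀) hsupp ht
  rwa [setAverage_eq, smul_eq_mul] at haverage

/-- **Proposition A.1: local Aleksandrov reflection principle.** -/
theorem aleksandrov_reflection
    (d : ℕ) (hd : 1 ≤ d) (m : ℝ) (hm0 : 0 < m) (hm1 : m < 1)
    (x₀ : EuclideanSpace ℝ (Fin d)) (R₀ lam T : ℝ) (hR₀ : 0 < R₀) (hlam : 2 < lam)
    (hT : 0 < T)
    (u : ℝ → EuclideanSpace ℝ (Fin d) → ℝ) (u₀ : EuclideanSpace ℝ (Fin d) → ℝ)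
    (h₀ : ∀ x, 0 ≤ u₀ x)
    (hsupp : Function.support u₀ ⊆ closedBall x₀ R₀)
    (hsol : IsDirichletSol m x₀ (lam * R₀) T u u₀) :
    (∀ t ∈ Ioo (0 : ℝ) T, ∀ x₂ ∈ ball x₀ (lam * R₀) \ ball x₀ (2 * R₀),
      u t x₂ ≤ u t x₀) ∧
    ∀ t ∈ Ioo (0 : ℝ) T,
      (volume (ball x₀ (lam * R₀) \ ball x₀ (2 * R₀))).toReal⁻¹ *
        ∫ x in ball x₀ (lam * R₀) \ ball x₀ (2 * R₀), u t x ≤ u t x₀ := by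
  exact aleksandrov_reflection_general hd hm0 hR₀ hlam hsupp hsol
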